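/- Let T_n denote the number of rooted labeled trees on n vertices and let N_n denote the number of ordered pairs (T₁, T₂) of rooted labeled trees on n vertices that are isomorphic. Set p_n = N_n / T_n², the probability that two independently, uniformly chosen rooted labeled trees on n vertices are isomorphic. Then there exist constants A > 0 and c ∈ (0,1) such that p_n / (n^{3/2} · c^n) → A as n → ∞. -/

import Mathlib

open scoped Classical BigOperators

/-- A rooted labeled tree on `n` vertices: a simple graph on `Fin n` that is a
tree, together with a distinguished root vertex. -/
structure RTree (n : ℕ) where
  graph : SimpleGraph (Fin n)
  isTree : graph.IsTree
  root : Fin n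

namespace RTree

/-- Two rooted labeled trees are isomorphic if there is a graph isomorphism
mapping root to root. -/
def Isom {n : ℕ} (T₁ T₂ : RTree n) : Prop :=
  ∃ φ : T₁.graph ≃g T₂.graph, φ T₁.root = T₂.root

/-- The out-degree (number of children) of a vertex: its degree if it is the
root and its degree minus one otherwise. -/
noncomputable def outdeg {n : ℕ} (T : RTree n) (v : Fin n) : ℕ :=
  if v = T.root then (T.graph.neighborSet v).ncard
  else (T.graph.neighborSet v).ncard - 1

/-- The number of root-fixing graph automorphisms. -/
noncomputable def autCard {n : ℕ} (T : RTree n) : ℕ :=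
  Nat.card {φ : T.graph ≃g T.graph // φ T.root = T.root}

instance finite {n : ℕ} : Finite (RTree n) := by
  have h : Function.Injective (fun T : RTree n => (T.graph, T.root)) := by
    rintro ⟨g₁, h₁, r₁⟩ ⟨g₂, h₂, r₂⟩ h
    simp_all
  exact Finite.of_injective _ h

noncomputable instance fintype {n : ℕ} : Fintype (RTree n) := Fintype.ofFinite _

end RTree

/-- The probability that two independently, uniformly chosen rooted labeled
trees on `n` vertices are isomorphic. -/
noncomputable def probIsom (n : ℕ) : ℝ :=
  (Nat.card {p : RTree n × RTree n // p.1.Isom p.2} : ℝ) /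
    (Nat.card (RTree n) : ℝ) ^ 2


section A1
open Complex Filter Topology

lemma A1_abs_lower (r : ℝ) (hr : 1/2 ≤ r) (hr1 : r < 1) (θ : ℝ) (h0 : 0 ≤ θ) (h1 : θ ≤ 2 * Real.pi) :
    min (θ / Real.pi) ((2 * Real.pi - θ) / Real.pi) ≤ ‖1 - circleMap 0 r θ‖ := by
  have hs : Real.sin (θ/2) ≤ ‖1 - circleMap 0 r θ‖ := by
    apply le_of_sq_le_sq _ (norm_nonneg _)
    rw [Complex.sq_norm, Complex.normSq_apply]
    have e1 : (1 - circleMap 0 r θ).re = 1 - r * Real.cos θ := by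
      simp [circleMap, Complex.exp_re]
    have e2 : (1 - circleMap 0 r θ).im = - (r * Real.sin θ) := by
      simp [circleMap, Complex.exp_im]
    rw [e1, e2]
    have h2 : Real.cos θ = 1 - 2 * Real.sin (θ/2)^2 := by
      have := Real.cos_sq' (θ/2)
      have h3 := Real.cos_two_mul (θ/2)
      rw [show 2 * (θ/2) = θ by ring] at h3
      rw [h3, this]; ring
    have h4 := Real.sin_sq_add_cos_sq θ
    nlinarith [sq_nonneg (Real.sin (θ/2)), sq_nonneg (1-r), mul_nonneg (sub_nonneg.2 hr) (sq_nonneg (Real.sin (θ/2)))]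
  refine le_trans ?_ hs
  by_cases h : θ ≤ Real.pi
  · refine (min_le_left _ _).trans ?_
    have := Real.mul_le_sin (x := θ/2) (by linarith) (by linarith)
    exact (le_of_eq (by ring)).trans this
  · refine (min_le_right _ _).trans ?_
    have := Real.mul_le_sin (x := Real.pi - θ/2) (by linarith) (by linarith)
    rw [Real.sin_pi_sub] at this
    exact (le_of_eq (by field_simp)).trans this

lemma A1_coef_bound (h : ℂ → ℂ) (hd : DifferentiableOn ℂ h (Metric.ball 0 1)) (C : ℝ)
    (hC : ∀ s : ℂ, 1/2 ≤ ‖s‖ → ‖s‖ < 1 → ‖h s‖ ≤ C / ‖1 - s‖) :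
    ∃ C' : ℝ, ∀ n : ℕ, 2 ≤ n → ‖iteratedDeriv n h 0 / (n.factorial : ℂ)‖ ≤ C' * (n:ℝ)^(1/4 : ℝ) := by
  have hC0 : 0 ≤ C := by
    have := hC (1/2) (by norm_num) (by norm_num)
    have h2 := (norm_nonneg _).trans this
    norm_num at h2
    linarith
  set B : ℝ → ℝ := fun θ => (θ / Real.pi) ^ (-(3/4) : ℝ) + ((2 * Real.pi - θ) / Real.pi) ^ (-(3/4) : ℝ) with hB
  have hi0 : IntervalIntegrable (fun θ : ℝ => θ ^ (-(3/4) : ℝ)) MeasureTheory.volume 0 2 :=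
    intervalIntegral.intervalIntegrable_rpow' (by norm_num)
  have hBint : IntervalIntegrable B MeasureTheory.volume 0 (2 * Real.pi) := by
    have hpi := Real.pi_pos
    have h1 : IntervalIntegrable (fun θ : ℝ => (θ / Real.pi) ^ (-(3/4) : ℝ)) MeasureTheory.volume 0 (2 * Real.pi) := by
      have := hi0.comp_mul_right (c := Real.pi⁻¹) 
      simp only [div_inv_eq_mul, zero_mul] at this
      simpa [div_eq_mul_inv] using this
    have h2 := (h1.comp_sub_left (2 * Real.pi)).symm
    simp only [sub_zero, sub_self] at h2
    exact h1.add h2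
  refine ⟨(2 * Real.pi)⁻¹ * (C * ∫ θ in (0:ℝ)..(2 * Real.pi), B θ) * Real.exp 2, fun n hn => ?_⟩
  have hn0 : (0:ℝ) < n := by positivity
  have hn2 : (2:ℝ) ≤ n := by exact_mod_cast hn
  set r : ℝ := 1 - 1 / n with hr
  have hrn : (1:ℝ)/n ≤ 1/2 := by apply one_div_le_one_div_of_le <;> linarith
  have hrn0 : (0:ℝ) < 1/n := by positivity
  have hr2 : 1/2 ≤ r := by rw [hr]; linarith
  have hr1 : r < 1 := by rw [hr]; linarith
  have hrpos : 0 < r := by linarith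
  have hsub : Metric.closedBall (0:ℂ) r ⊆ Metric.ball 0 1 := Metric.closedBall_subset_ball hr1
  have hps := DifferentiableOn.hasFPowerSeriesOnBall (R := ⟨r, hrpos.le⟩) (hd.mono hsub) (by exact_mod_cast hrpos)
  have han : AnalyticAt ℂ h 0 := hd.analyticAt (Metric.ball_mem_nhds _ one_pos)
  have heq := hps.hasFPowerSeriesAt.eq_formalMultilinearSeries han.hasFPowerSeriesAt
  have hnorm : ‖iteratedDeriv n h 0 / (n.factorial : ℂ)‖ = ‖cauchyPowerSeries h 0 r n‖ := by
    have := congrFun heq n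
    have h3 : cauchyPowerSeries h 0 r n = _ := this
    rw [h3, FormalMultilinearSeries.ofScalars_norm]
  rw [hnorm]
  refine (norm_cauchyPowerSeries_le _ _ _ _).trans ?_
  have hpow : |r|⁻¹ ^ n ≤ Real.exp 2 := by
    rw [abs_of_pos hrpos]
    have h1 : r⁻¹ ≤ Real.exp (2 / n) := by
      have h2 : r⁻¹ ≤ 2 / n + 1 := by
        rw [inv_le_comm₀ hrpos (by positivity), hr]
        rw [inv_le_iff_one_le_mul₀ (by positivity)]
        field_simp
        nlinarith
      exact h2.trans (Real.add_one_le_exp _)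
    calc r⁻¹ ^ n ≤ (Real.exp (2/n))^n := by gcongr
      _ = Real.exp 2 := by rw [← Real.exp_nat_mul]; congr 1; field_simp
  have hint : (∫ θ in (0:ℝ)..(2 * Real.pi), ‖h (circleMap 0 r θ)‖) ≤ ∫ θ in (0:ℝ)..(2 * Real.pi), C * (n:ℝ)^(1/4:ℝ) * B θ := by
    apply intervalIntegral.integral_mono_on_of_le_Ioo (by positivity)
    · apply Continuous.intervalIntegrable
      apply Continuous.norm
      apply ContinuousOn.comp_continuous hd.continuousOn (continuous_circleMap 0 r)
      intro θ; apply hsub; simp [abs_of_pos hrpos]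
    · exact hBint.const_mul _
    · intro θ hθ
      have hnr : ‖circleMap 0 r θ‖ = r := by simp [abs_of_pos hrpos]
      have h1 := hC (circleMap 0 r θ) (by rw [hnr]; exact hr2) (by rw [hnr]; exact hr1)
      refine h1.trans ?_
      have h2 := A1_abs_lower r hr2 hr1 θ hθ.1.le hθ.2.le
      have h3 : 1 / n ≤ ‖1 - circleMap 0 r θ‖ := by
        have := norm_sub_norm_le (1:ℂ) (circleMap 0 r θ)
        rw [hnr] at this
        simp [hr] at this ⊢; exact this
      set u := ‖1 - circleMap 0 r θ‖ with hu
      have hu0 : 0 < u := lt_of_lt_of_le hrn0 h3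
      have hpi := Real.pi_pos
      have hB1 : u ^ (-(3/4):ℝ) ≤ B θ := by
        have p1 : 0 < θ / Real.pi := div_pos hθ.1 hpi
        have p2 : 0 < (2 * Real.pi - θ) / Real.pi := div_pos (by linarith [hθ.2]) hpi
        rcases min_le_iff.1 h2 with h4 | h4
        · have := Real.rpow_le_rpow_of_nonpos p1 h4 (z := -(3/4)) (by norm_num)
          have q := Real.rpow_nonneg p2.le (-(3/4))
          simp only [hB]; linarith
        · have := Real.rpow_le_rpow_of_nonpos p2 h4 (z := -(3/4)) (by norm_num)
          have q := Real.rpow_nonneg p1.le (-(3/4))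
          simp only [hB]; linarith
      have hB2 : u ^ (-(1/4):ℝ) ≤ (n:ℝ)^(1/4:ℝ) := by
        have := Real.rpow_le_rpow_of_nonpos hrn0 h3 (z := -(1/4)) (by norm_num)
        refine this.trans (le_of_eq ?_)
        rw [one_div, Real.inv_rpow hn0.le, Real.rpow_neg hn0.le, inv_inv]
      have : C / u = C * (u ^ (-(1/4):ℝ) * u ^ (-(3/4):ℝ)) := by
        rw [← Real.rpow_add hu0]; norm_num [Real.rpow_neg_one, div_eq_mul_inv]
      rw [this, mul_assoc]
      gcongr
  rw [intervalIntegral.integral_const_mul] at hint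
  have hBnn : 0 ≤ ∫ θ in (0:ℝ)..(2 * Real.pi), B θ := by
    apply intervalIntegral.integral_nonneg (by positivity)
    intro θ hθ
    have hpi := Real.pi_pos
    have : 0 ≤ 2 * Real.pi - θ := by linarith [hθ.2]
    have := hθ.1
    simp only [hB]; positivity
  calc _ ≤ ((2 * Real.pi)⁻¹ * (C * (n:ℝ)^(1/4:ℝ) * ∫ θ in (0:ℝ)..(2 * Real.pi), B θ)) * Real.exp 2 := by
        gcongr
    _ = _ := by ring

/-- Asymptotics of the coefficients of `(1-s)^(-3/2)`. -/
lemma A1_choose_tendsto : ∃ L : ℝ, 0 < L ∧ 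
    Tendsto (fun n : ℕ => Ring.choose ((3/2 : ℝ) + n - 1) n / (n:ℝ)^(1/2:ℝ)) atTop (𝓝 L) := by
  refine ⟨(Real.Gamma (3/2))⁻¹, inv_pos.2 (Real.Gamma_pos_of_pos (by norm_num)), ?_⟩
  have h1 := (Real.GammaSeq_tendsto_Gamma (3/2)).inv₀ (Real.Gamma_pos_of_pos (by norm_num)).ne'
  have h2 : Tendsto (fun n : ℕ => (n:ℝ) / ((n:ℝ) + 3/2)) atTop (𝓝 1) := by
    simpa using tendsto_natCast_div_add_atTop (𝕜 := ℝ) (3/2 : ℝ)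
  have h3 := h1.mul h2
  rw [mul_one] at h3
  refine h3.congr' ?_
  filter_upwards [eventually_gt_atTop 0] with n hn
  have hn0 : (0:ℝ) < n := by exact_mod_cast hn
  rw [← Ring.multichoose_eq]
  have h4 := Ring.factorial_nsmul_multichoose_eq_ascPochhammer (3/2 : ℝ) n
  have h5 : (ascPochhammer ℕ n).smeval (3/2:ℝ) = ∏ j ∈ Finset.range n, (3/2 + (j:ℝ)) := by
    rw [Polynomial.ascPochhammer_smeval_eq_eval]
    clear h4
    clear h1 h2 h3 hn hn0
    induction n with
    | zero => simp
    | succ n ih => rw [ascPochhammer_succ_eval, ih, Finset.prod_range_succ]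
  rw [h5, nsmul_eq_mul] at h4
  unfold Real.GammaSeq
  rw [Finset.prod_range_succ, ← h4]
  have : (n:ℝ)^(3/2:ℝ) = n * (n:ℝ)^(1/2:ℝ) := by
    rw [show (3/2:ℝ) = 1 + 1/2 by norm_num, Real.rpow_add hn0, Real.rpow_one]
  rw [this]
  have : (n:ℝ)^(1/2:ℝ) ≠ 0 := by positivity
  have hf : (n.factorial:ℝ) ≠ 0 := by positivity
  have hm : (3/2:ℝ) + n ≠ 0 := by positivity
  have hm : (n:ℝ) + 3/2 ≠ 0 := by positivity
  field_simp
  ring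
end A1


section A2
open Complex Filter Topology

lemma A2_lim (g : ℂ → ℂ) (δ L : ℝ) (hδ : 0 < δ)
    (hg : ∀ t : ℂ, ‖t‖ < 1 → ‖1 - t‖ ≤ δ → DifferentiableAt ℂ g t ∧ ‖deriv g t‖ ≤ L)
    (hlim : Tendsto (fun t : ℝ => g t) (𝓝[<] 1) (𝓝 0)) (s : ℂ) (hs : ‖s‖ < 1) (hsδ : ‖1 - s‖ ≤ δ) :
    ‖g s‖ ≤ L * ‖1 - s‖ := by
  set S : Set ℂ := Metric.ball 0 1 ∩ Metric.closedBall 1 δ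
  have hS : Convex ℝ S := (convex_ball _ _).inter (convex_closedBall _ _)
  have hmem : ∀ t : ℂ, ‖t‖ < 1 → ‖1 - t‖ ≤ δ → t ∈ S := fun t h1 h2 => by
    refine ⟨by simpa using h1, ?_⟩
    rw [Metric.mem_closedBall, dist_comm, dist_eq_norm]; exact h2
  have hmem' : ∀ t ∈ S, ‖t‖ < 1 ∧ ‖1 - t‖ ≤ δ := fun t h => by
    refine ⟨by simpa using h.1, ?_⟩
    have := h.2
    rwa [Metric.mem_closedBall, dist_comm, dist_eq_norm] at this
  have hev : ∀ᶠ t : ℝ in 𝓝[<] 1, ‖g s - g t‖ ≤ L * ‖s - t‖ := by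
    have h1 : ∀ᶠ t : ℝ in 𝓝[<] (1:ℝ), t < 1 := eventually_mem_nhdsWithin
    have h2 : ∀ᶠ t : ℝ in 𝓝[<] (1:ℝ), max 0 (1 - δ) < t := by
      apply eventually_nhdsWithin_of_eventually_nhds
      apply lt_mem_nhds
      simp [hδ]
    filter_upwards [h1, h2] with t h1 h2
    have h0 : 0 < t := (le_max_left _ _).trans_lt h2
    have h3 : 1 - δ < t := (le_max_right _ _).trans_lt h2
    have ht : (t:ℂ) ∈ S := by
      apply hmem
      · simpa [abs_of_pos h0] using h1
      · rw [← Complex.ofReal_one, ← Complex.ofReal_sub, Complex.norm_real, Real.norm_eq_abs, abs_le]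
        constructor <;> linarith
    exact hS.norm_image_sub_le_of_norm_deriv_le (f := g) (C := L)
      (fun x hx => (hg x (hmem' x hx).1 (hmem' x hx).2).1)
      (fun x hx => (hg x (hmem' x hx).1 (hmem' x hx).2).2) ht (hmem s hs hsδ)
  have hl : Tendsto (fun t : ℝ => ‖g s - g t‖) (𝓝[<] 1) (𝓝 ‖g s - 0‖) :=
    (tendsto_const_nhds.sub hlim).norm
  have hr : Tendsto (fun t : ℝ => L * ‖s - t‖) (𝓝[<] 1) (𝓝 (L * ‖s - (1:ℝ)‖)) := by
    apply Tendsto.mono_left _ nhdsWithin_le_nhds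
    apply Continuous.tendsto
    fun_prop
  have := le_of_tendsto_of_tendsto hl hr hev
  rw [sub_zero] at this
  rwa [norm_sub_rev, ← Complex.ofReal_one]

lemma A2_sqrt (s : ℂ) (hs : ‖s‖ < 1) : 
    ((1 - s) ^ (1/2 : ℂ)) ^ 2 = 1 - s ∧ (1 - s) ^ (3/2 : ℂ) = ((1 - s) ^ (1/2 : ℂ))^3 ∧
    ‖(1 - s) ^ (1/2 : ℂ)‖ ^ 2 = ‖1 - s‖ ∧ 0 < ‖(1 - s) ^ (1/2 : ℂ)‖ ∧
    ‖(1 - s) ^ (1/2 : ℂ)‖ ≤ 2 * ((1 - s) ^ (1/2 : ℂ)).re := by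
  have h1 : ((1 - s) ^ (1/2 : ℂ)) ^ 2 = 1 - s := by
    rw [← Complex.cpow_nat_mul]; norm_num
  have h2 : ‖(1 - s) ^ (1/2 : ℂ)‖ ^ 2 = ‖1 - s‖ := by rw [← norm_pow, h1]
  have hre : 0 < (1 - s).re := by
    have := (Complex.abs_re_le_norm s)
    have h3 := le_abs_self s.re
    simp; linarith
  have hne : 1 - s ≠ 0 := by intro h; simp [h] at hre
  refine ⟨h1, ?_, h2, ?_, ?_⟩
  · rw [← Complex.cpow_nat_mul]; norm_num
  · rw [norm_pos_iff]; intro h; rw [h] at h1; apply hne; rw [← h1]; simp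
  · have hw : 0 ≤ ((1 - s) ^ (1/2 : ℂ)).re := by
      rw [Complex.cpow_def_of_ne_zero hne, Complex.exp_re]
      apply mul_nonneg (Real.exp_pos _).le
      apply Real.cos_nonneg_of_mem_Icc
      have him : (Complex.log (1-s) * (1/2)).im = arg (1-s) / 2 := by
        rw [show (1/2:ℂ) = ((1/2:ℝ):ℂ) by norm_num, Complex.im_mul_ofReal, Complex.log_im]; ring
      rw [him]
      have := Complex.neg_pi_lt_arg (1-s)
      have := Complex.arg_le_pi (1-s)
      constructor <;> linarith
    set w := (1 - s) ^ (1/2 : ℂ)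
    rw [← h1, sq] at hre
    rw [Complex.mul_re] at hre
    apply le_of_sq_le_sq _ (by linarith)
    rw [Complex.sq_norm, Complex.normSq_apply]
    nlinarith

set_option maxHeartbeats 2000000 in
lemma A2_local (D M : ℂ → ℂ) (κ a B : ℝ) (hκ : 0 < κ) (ha : 0 < a) (hB : 0 < B)
    (hD : DifferentiableOn ℂ D (Metric.ball 0 1)) (hD2 : ∀ s, ‖s‖ < 1 → ‖D s‖ ≤ 2)
    (hlim : Tendsto (fun t : ℝ => D t) (𝓝[<] 1) (𝓝 0))
    (hre : ∀ s : ℂ, ‖s‖ < 1 → a * (1 - s.re) ≤ (D s).re)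
    (hM : ∀ s, 1/4 < ‖s‖ → ‖s‖ < 1 → DifferentiableAt ℂ M s ∧ ‖deriv M s‖ ≤ B ∧ ‖M s‖ ≤ B ∧ ‖M s - κ‖ ≤ B * ‖1 - s‖)
    (hode : ∀ s, 1/4 < ‖s‖ → ‖s‖ < 1 → D s * deriv D s = - (M s * (1 - D s))) :
    ∃ C : ℝ, ∀ s : ℂ, 1/2 ≤ ‖s‖ → ‖s‖ < 1 →
      ‖deriv (deriv D) s + (Real.sqrt (2 * κ) / 4 : ℝ) * (1 / (1 - s) ^ (3/2 : ℂ))‖ ≤ C / ‖1 - s‖ := by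
  set w : ℂ → ℂ := fun s => (1 - s) ^ (1/2 : ℂ) with hw
  have hwp := A2_sqrt
  have hDd : ∀ s, ‖s‖ < 1 → DifferentiableAt ℂ D s := fun s hs =>
    hD.differentiableAt (Metric.isOpen_ball.mem_nhds (by simpa using hs))
  have hnear : ∀ t : ℂ, ‖1 - t‖ < 1/2 → 1/4 < ‖t‖ := fun t ht => by
    have := norm_sub_norm_le (1:ℂ) (1 - t)
    simp at this; linarith
  -- Step 1
  obtain ⟨C1, hC1, h1⟩ : ∃ C1 > 0, ∀ s, ‖s‖ < 1 → ‖D s‖ ≤ C1 * ‖w s‖ := by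
    refine ⟨Real.sqrt (6 * B) + 4, by positivity, fun s hs => ?_⟩
    obtain ⟨e1, e2, e3, e4, e5⟩ := hwp s hs
    change ‖w s‖^2 = _ at e3
    change 0 < ‖w s‖ at e4
    by_cases hcase : ‖1 - s‖ ≤ 1/3
    · have := A2_lim (fun t => D t ^ 2) (1/3) (6 * B) (by norm_num) (fun t ht ht2 => by
        have q := hnear t (by linarith)
        refine ⟨(hDd t ht).pow 2, ?_⟩
        have : deriv (fun t => D t ^ 2) t = - (2 * (M t * (1 - D t))) := by
          rw [deriv_fun_pow (hDd t ht)]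
          have := hode t q ht
          push_cast
          linear_combination 2 * this
        rw [this, norm_neg, norm_mul, norm_mul]
        have h3 : ‖1 - D t‖ ≤ 3 := by
          refine (norm_sub_le _ _).trans ?_
          have := hD2 t ht
          simp; linarith
        have h4 := (hM t q ht).2.2.1
        calc ‖(2:ℂ)‖ * (‖M t‖ * ‖1 - D t‖) ≤ 2 * (B * 3) := by
              rw [Complex.norm_two]; gcongr
          _ = 6 * B := by ring) (by simpa using hlim.pow 2) s hs hcase
      have h5 : ‖D s‖ ^ 2 ≤ (Real.sqrt (6 * B) * ‖w s‖)^2 := by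
        rw [mul_pow, Real.sq_sqrt (by positivity), e3, ← norm_pow]; exact this
      have := le_of_sq_le_sq h5 (by positivity)
      nlinarith
    · have h6 : 1/2 ≤ ‖w s‖ := by
        apply le_of_sq_le_sq _ e4.le
        rw [e3]; linarith
      have := hD2 s hs
      nlinarith [Real.sqrt_nonneg (6*B)]
  -- Step 2
  set c : ℝ := Real.sqrt (2 * κ) with hc
  have hc0 : 0 < c := Real.sqrt_pos.2 (by linarith)
  have hc2 : c ^ 2 = 2 * κ := Real.sq_sqrt (by linarith)
  have hc2' : (c:ℂ) ^ 2 = 2 * κ := by exact_mod_cast hc2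
  have hwle : ∀ s : ℂ, ‖s‖ < 1 → ‖w s‖ ≤ 2 := fun s hs => by
    obtain ⟨e1, e2, e3, e4, e5⟩ := hwp s hs
    apply le_of_sq_le_sq _ (by norm_num)
    change ‖w s‖^2 = _ at e3
    rw [e3]
    refine (norm_sub_le _ _).trans ?_
    simp; linarith
  obtain ⟨C2, hC2, h2⟩ : ∃ C2 > 0, ∀ s, ‖s‖ < 1 → ‖D s ^ 2 - c^2 * w s ^2‖ ≤ C2 * ‖w s‖^3 := by
    refine ⟨2 * (3 * B + κ * C1) + 8 * (4 + 8 * κ), by positivity, fun s hs => ?_⟩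
    obtain ⟨e1, e2, e3, e4, e5⟩ := hwp s hs
    change ‖w s‖^2 = _ at e3
    change 0 < ‖w s‖ at e4
    change w s ^ 2 = _ at e1
    by_cases hcase : ‖1 - s‖ ≤ 1/3
    · have := A2_lim (fun t => D t ^ 2 - 2 * κ * (1 - t)) (‖1 - s‖) (2 * (3 * B + κ * C1) * ‖w s‖) (by rw [← e3]; positivity) (fun t ht ht2 => by
        have q := hnear t (by linarith)
        have hdt : HasDerivAt (fun t => D t ^ 2 - 2 * κ * (1 - t)) (2 * D t * deriv D t - 2 * κ * (-1)) t := by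
          have := (hDd t ht).hasDerivAt.pow 2
          have h3 := ((hasDerivAt_id t).const_sub 1).const_mul (2 * (κ:ℂ))
          convert! this.sub h3 using 1
          push_cast; ring
        refine ⟨hdt.differentiableAt, ?_⟩
        rw [hdt.deriv]
        have : 2 * D t * deriv D t - 2 * κ * (-1) = 2 * ((κ - M t) * (1 - D t) + κ * D t) := by
          linear_combination 2 * hode t q ht
        rw [this, norm_mul, Complex.norm_two]
        have h3 : ‖1 - D t‖ ≤ 3 := by
          refine (norm_sub_le _ _).trans ?_
          have := hD2 t ht
          simp; linarith
        have h4 := (hM t q ht).2.2.2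
        rw [norm_sub_rev] at h4
        have h5 := h1 t ht
        have h6 : ‖w t‖ ≤ ‖w s‖ := by
          apply le_of_sq_le_sq _ e4.le
          rw [e3, (hwp t ht).2.2.1]; exact ht2
        have h7 : ‖1 - t‖ ≤ ‖w s‖ := by
          refine ht2.trans ?_
          rw [← e3]
          have : ‖w s‖ ≤ 1 := by
            apply le_of_sq_le_sq _ (by norm_num)
            rw [e3]; linarith
          nlinarith
        calc 2 * ‖(κ - M t) * (1 - D t) + κ * D t‖ ≤ 2 * (‖κ - M t‖ * ‖1 - D t‖ + κ * ‖D t‖) := by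
              gcongr
              refine (norm_add_le _ _).trans ?_
              rw [norm_mul, norm_mul, Complex.norm_real, Real.norm_eq_abs, abs_of_pos hκ]
          _ ≤ 2 * ((B * ‖w s‖) * 3 + κ * (C1 * ‖w s‖)) := by
              have : ‖κ - M t‖ ≤ B * ‖w s‖ := h4.trans (by gcongr)
              have : ‖D t‖ ≤ C1 * ‖w s‖ := h5.trans (by gcongr)
              gcongr
          _ = 2 * (3 * B + κ * C1) * ‖w s‖ := by ring) (by
            have h3 : Tendsto (fun t : ℝ => (2 * κ * (1 - t) : ℂ)) (𝓝[<] 1) (𝓝 (2 * κ * (1 - (1:ℝ)))) := by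
              apply Tendsto.mono_left _ nhdsWithin_le_nhds
              apply Continuous.tendsto
              fun_prop
            simpa using (hlim.pow 2).sub h3) s hs le_rfl
      rw [hc2', e1]
      refine this.trans ?_
      rw [← e3]
      have : 0 ≤ 8 * (4 + 8 * κ) * ‖w s‖^3 := by positivity
      nlinarith
    · have h6 : 1/2 ≤ ‖w s‖ := by
        apply le_of_sq_le_sq _ e4.le
        rw [e3]; linarith
      have h7 : (1/2)^3 ≤ ‖w s‖^3 := by gcongr
      have h8 : ‖D s ^ 2 - c^2 * w s ^2‖ ≤ 4 + 8 * κ := by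
        refine (norm_sub_le _ _).trans ?_
        rw [hc2', norm_mul, norm_pow, norm_pow, norm_mul, Complex.norm_real, Real.norm_eq_abs, abs_of_pos hκ, Complex.norm_two]
        have := hD2 s hs
        have := hwle s hs
        calc ‖D s‖^2 + 2 * κ * ‖w s‖^2 ≤ 2^2 + 2 * κ * 2^2 := by gcongr
          _ = _ := by ring
      have : 0 ≤ 2 * (3 * B + κ * C1) * ‖w s‖^3 := by positivity
      nlinarith
  -- Step 3
  have hreD : ∀ s : ℂ, ‖s‖ < 1 → 0 ≤ 1 - s.re := fun s hs => by
    have := Complex.re_le_norm s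
    linarith
  obtain ⟨C3, hC3, h3⟩ : ∃ C3 > 0, ∀ s, ‖s‖ < 1 → ‖D s - c * w s‖ ≤ C3 * ‖w s‖^2 := by
    refine ⟨C2 / (c/2), by positivity, fun s hs => ?_⟩
    obtain ⟨e1, e2, e3, e4, e5⟩ := hwp s hs
    change 0 < ‖w s‖ at e4
    change ‖w s‖ ≤ 2 * (w s).re at e5
    have h4 : c / 2 * ‖w s‖ ≤ ‖D s + c * w s‖ := by
      refine le_trans ?_ (Complex.re_le_norm _)
      rw [Complex.add_re, Complex.re_ofReal_mul]
      have := hre s hs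
      have := mul_nonneg ha.le (hreD s hs)
      nlinarith
    have h5 := h2 s hs
    rw [show D s ^ 2 - c^2 * w s ^2 = (D s - c * w s) * (D s + c * w s) by ring, norm_mul] at h5
    have h6 : ‖D s - c * w s‖ * (c / 2 * ‖w s‖) ≤ C2 * ‖w s‖^3 := le_trans (by gcongr) h5
    rw [div_mul_eq_mul_div, le_div_iff₀ (by positivity)]
    have : (‖D s - c * w s‖ * (c / 2)) * ‖w s‖ ≤ (C2 * ‖w s‖^2) * ‖w s‖ := by nlinarith
    exact le_of_mul_le_mul_right this e4
  -- Step 4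
  obtain ⟨c4, hc4, h4⟩ : ∃ c4 > 0, ∀ s, ‖s‖ < 1 → c4 * ‖w s‖ ≤ ‖D s‖ := by
    set w0 := c / (2 * C3) with hw0
    have hw0p : 0 < w0 := by positivity
    refine ⟨min (c/2) (a/2 * w0^3), by positivity, fun s hs => ?_⟩
    obtain ⟨e1, e2, e3, e4, e5⟩ := hwp s hs
    change 0 < ‖w s‖ at e4
    change ‖w s‖^2 = _ at e3
    by_cases hcase : ‖w s‖ ≤ w0
    · refine le_trans (mul_le_mul_of_nonneg_right (min_le_left _ _) e4.le) ?_
      have h5 := h3 s hs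
      have h6 : ‖(c:ℂ) * w s‖ ≤ ‖D s - c * w s‖ + ‖D s‖ := by
        rw [norm_sub_rev]
        have := norm_sub_norm_le ((c:ℂ) * w s) (D s)
        linarith
      rw [norm_mul, Complex.norm_real, Real.norm_eq_abs, abs_of_pos hc0] at h6
      have h7 : C3 * ‖w s‖ ≤ c/2 := by
        calc C3 * ‖w s‖ ≤ C3 * w0 := by gcongr
          _ = c/2 := by rw [hw0]; field_simp
      nlinarith
    · refine le_trans (mul_le_mul_of_nonneg_right (min_le_right _ _) e4.le) ?_
      push Not at hcase
      have h5 : ‖1 - s‖^2 ≤ 2 * (1 - s.re) := by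
        have hs1 : ‖s‖^2 ≤ 1 := by nlinarith [norm_nonneg s]
        rw [Complex.sq_norm, Complex.normSq_apply] at hs1 ⊢
        simp
        nlinarith
      have h6 : w0^3 * ‖w s‖ ≤ ‖1 - s‖^2 := by
        rw [← e3]
        calc w0^3 * ‖w s‖ ≤ ‖w s‖^3 * ‖w s‖ := by gcongr
          _ = _ := by ring
      have h7 := (hre s hs).trans (Complex.re_le_norm _)
      nlinarith
  -- Step 5
  have hD0 : ∀ s, ‖s‖ < 1 → D s ≠ 0 := fun s hs h => by
    have := h4 s hs
    rw [h, norm_zero] at this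
    have := (hwp s hs).2.2.2.1
    change 0 < ‖w s‖ at this
    nlinarith
  have hderiv : ∀ s, 1/4 < ‖s‖ → ‖s‖ < 1 → deriv D s = - (M s * (1 - D s)) / D s := fun s hs hs1 => by
    rw [eq_div_iff (hD0 s hs1), mul_comm]; exact hode s hs hs1
  have hderiv2 : ∀ s, 1/2 ≤ ‖s‖ → ‖s‖ < 1 → deriv (deriv D) s = 
      - (deriv M s * (1 - D s)) / D s - M s^2 * (1 - D s) / D s ^ 2 - M s^2 * (1 - D s)^2 / D s^3 := fun s hs hs1 => by
    have hev : deriv D =ᶠ[𝓝 s] fun s => - (M s * (1 - D s)) / D s := by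
      have ho : IsOpen {s : ℂ | 1/4 < ‖s‖ ∧ ‖s‖ < 1} := by
        apply IsOpen.inter
        · exact isOpen_lt continuous_const continuous_norm
        · exact isOpen_lt continuous_norm continuous_const
      filter_upwards [ho.mem_nhds (show s ∈ {s : ℂ | 1/4 < ‖s‖ ∧ ‖s‖ < 1} from ⟨by linarith, hs1⟩)] with t ht
      exact hderiv t ht.1 ht.2
    rw [hev.deriv_eq]
    have hs4 : 1/4 < ‖s‖ := by linarith
    have hMd := (hM s hs4 hs1).1.hasDerivAt
    have hDs := (hDd s hs1).hasDerivAt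
    have := ((hMd.mul (hDs.const_sub 1)).neg.div hDs (hD0 s hs1))
    have h5 : HasDerivAt (fun s => - (M s * (1 - D s)) / D s) _ s := this
    rw [h5.deriv, hderiv s hs4 hs1]
    have := hD0 s hs1
    simp only [Pi.neg_apply, Pi.mul_apply]
    field_simp
    ring
  have hκ2 : (κ:ℂ)^2 = c^3 * (c/4) := by
    linear_combination (-1/4 : ℂ) * (c^2 + 2 * κ) * hc2' 
  refine ⟨3 * B / c4 * 2 + B^2 * 3 / c4^2 + (κ^2 * C3 * (C1^2 + c * C1 + c^2) + c^3 * ((6 * B * 2 + κ * C1) * (B * 3 + κ))) / (c4^3 * c^3), fun s hs hs1 => ?_⟩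
  obtain ⟨e1, e2, e3, e4, e5⟩ := hwp s hs1
  change 0 < ‖w s‖ at e4
  change ‖w s‖^2 = _ at e3
  change w s ^ 2 = _ at e1
  change _ = w s ^ 3 at e2
  have hs4 : 1/4 < ‖s‖ := by linarith
  obtain ⟨m1, m2, m3, m4⟩ := hM s hs4 hs1
  have d0 := hD0 s hs1
  have w0 : w s ≠ 0 := norm_pos_iff.1 e4
  have hcC : (c:ℂ) ≠ 0 := by exact_mod_cast hc0.ne'
  have k1 := h1 s hs1
  have k3 := h3 s hs1
  have k4 := h4 s hs1
  have kw := hwle s hs1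
  have l3 : ‖1 - D s‖ ≤ 3 := by
    refine (norm_sub_le _ _).trans ?_
    have := hD2 s hs1
    simp; linarith
  rw [hderiv2 s hs hs1, e2]
  have key : - (deriv M s * (1 - D s)) / D s - M s^2 * (1 - D s) / D s ^ 2 - M s^2 * (1 - D s)^2 / D s^3
      + ((c/4:ℝ):ℂ) * (1 / w s ^ 3) = - (deriv M s * (1 - D s)) / D s - M s^2 * (1 - D s) / D s ^ 2 
      + ((κ^2 * (D s - c * w s) * (D s^2 + c * w s * D s + c^2 * w s^2)) + c^3 * w s^3 * ((κ - M s * (1 - D s)) * (M s * (1 - D s) + κ))) / (D s^3 * (c^3 * w s^3)) := by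
    have : ((c/4:ℝ):ℂ) * (1 / w s ^ 3) = κ^2 / (c^3 * w s^3) := by
      rw [hκ2]; push_cast; field_simp
    rw [this]
    field_simp
    ring
  rw [key, ← e3]
  set y := ‖w s‖ with hy
  have b0 : ‖M s * (1 - D s)‖ ≤ B * 3 := by rw [norm_mul]; gcongr
  have b1 : ‖- (deriv M s * (1 - D s)) / D s‖ ≤ 3 * B / c4 * 2 / y^2 := by
    rw [norm_div, norm_neg, norm_mul]
    calc ‖deriv M s‖ * ‖1 - D s‖ / ‖D s‖ ≤ B * 3 / (c4 * y) := by gcongr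
      _ = 3 * B / c4 * y / y^2 := by field_simp
      _ ≤ 3 * B / c4 * 2 / y^2 := by gcongr
  have b2 : ‖M s^2 * (1 - D s) / D s ^ 2‖ ≤ B^2 * 3 / c4^2 / y^2 := by
    rw [norm_div, norm_mul, norm_pow, norm_pow]
    calc ‖M s‖^2 * ‖1 - D s‖ / ‖D s‖^2 ≤ B^2 * 3 / (c4 * y)^2 := by gcongr
      _ = _ := by field_simp
  have b3 : ‖κ - M s * (1 - D s)‖ ≤ (6 * B * 2 + κ * C1) * y := by
    have : κ - M s * (1 - D s) = (κ - M s) * (1 - D s) + κ * D s := by ring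
    rw [this]
    refine (norm_add_le _ _).trans ?_
    rw [norm_mul, norm_mul, Complex.norm_real, Real.norm_eq_abs, abs_of_pos hκ]
    rw [norm_sub_rev] at m4
    rw [← e3] at m4
    calc _ ≤ B * y^2 * 3 + κ * (C1 * y) := by gcongr
      _ ≤ _ := by nlinarith [mul_pos hB e4]
  have b4 : ‖((κ^2 * (D s - c * w s) * (D s^2 + c * w s * D s + c^2 * w s^2)) + c^3 * w s^3 * ((κ - M s * (1 - D s)) * (M s * (1 - D s) + κ)))‖ ≤ (κ^2 * C3 * (C1^2 + c * C1 + c^2) + c^3 * ((6 * B * 2 + κ * C1) * (B * 3 + κ))) * y^4 := by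
    have n1 : ‖(κ:ℂ)‖ = κ := by rw [Complex.norm_real, Real.norm_eq_abs, abs_of_pos hκ]
    have n2 : ‖(c:ℂ)‖ = c := by rw [Complex.norm_real, Real.norm_eq_abs, abs_of_pos hc0]
    have q1 : ‖D s^2 + c * w s * D s + c^2 * w s^2‖ ≤ (C1 * y)^2 + c * y * (C1 * y) + c^2 * y^2 := by
      refine (norm_add₃_le).trans ?_
      simp only [norm_mul, norm_pow, n2]
      gcongr
    have q2 : ‖M s * (1 - D s) + κ‖ ≤ B * 3 + κ := by
      refine (norm_add_le _ _).trans ?_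
      rw [n1]; gcongr
    refine (norm_add_le _ _).trans ?_
    rw [norm_mul, norm_mul, norm_mul (_ * _), norm_mul (_ - _), norm_mul, norm_pow, norm_pow, norm_pow, n1, n2]
    calc _ ≤ κ^2 * (C3 * y^2) * ((C1 * y)^2 + c * y * (C1 * y) + c^2 * y^2) + c^3 * y^3 * (((6 * B * 2 + κ * C1) * y) * (B * 3 + κ)) := by
          gcongr
      _ = _ := by ring
  have b5 : ‖((κ^2 * (D s - c * w s) * (D s^2 + c * w s * D s + c^2 * w s^2)) + c^3 * w s^3 * ((κ - M s * (1 - D s)) * (M s * (1 - D s) + κ))) / (D s^3 * (c^3 * w s^3))‖ ≤ (κ^2 * C3 * (C1^2 + c * C1 + c^2) + c^3 * ((6 * B * 2 + κ * C1) * (B * 3 + κ))) / (c4^3 * c^3) / y^2 := by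
    rw [norm_div]
    have n2 : ‖(c:ℂ)‖ = c := by rw [Complex.norm_real, Real.norm_eq_abs, abs_of_pos hc0]
    have q : (c4 * y)^3 * (c^3 * y^3) ≤ ‖D s^3 * (c^3 * w s^3)‖ := by
      rw [norm_mul, norm_mul, norm_pow, norm_pow, norm_pow, n2]
      gcongr
    calc _ ≤ (κ^2 * C3 * (C1^2 + c * C1 + c^2) + c^3 * ((6 * B * 2 + κ * C1) * (B * 3 + κ))) * y^4 / ((c4 * y)^3 * (c^3 * y^3)) := by
          gcongr
      _ = _ := by field_simp
  refine (norm_add_le _ _).trans ?_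
  refine (add_le_add (norm_sub_le _ _) le_rfl).trans ?_
  refine (add_le_add (add_le_add b1 b2) b5).trans (le_of_eq ?_)
  ring
end A2


section A3
open Complex Filter Topology

lemma A3_final (f : ℕ → ℝ) (b C' L : ℝ) (hb : 0 < b) (hL : 0 < L) (g : ℕ → ℝ)
    (hg : Tendsto (fun n : ℕ => g n / (n:ℝ)^(1/2:ℝ)) atTop (𝓝 L))
    (h : ∀ n : ℕ, 2 ≤ n → |((n:ℝ)+2) * (n+1) * f (n+2) - b * g n| ≤ C' * (n:ℝ)^(1/4:ℝ)) :
    ∃ A : ℝ, 0 < A ∧ Tendsto (fun n : ℕ => (n:ℝ)^(3/2:ℝ) * f n) atTop (𝓝 A) := by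
  refine ⟨b * L, by positivity, ?_⟩
  rw [← tendsto_add_atTop_iff_nat 2]
  have h1 : Tendsto (fun n : ℕ => (((n:ℝ)+2) * (n+1) * f (n+2) - b * g n) / (n:ℝ)^(1/2:ℝ)) atTop (𝓝 0) := by
    have h2 : Tendsto (fun n : ℕ => C' * (n:ℝ)^(-(1/4):ℝ)) atTop (𝓝 (C' * 0)) :=
      ((tendsto_rpow_neg_atTop (by norm_num : (0:ℝ) < 1/4)).comp tendsto_natCast_atTop_atTop).const_mul C'
    rw [mul_zero] at h2
    apply squeeze_zero_norm' _ h2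
    filter_upwards [eventually_ge_atTop 2] with n hn
    have hn0 : (0:ℝ) < n := by positivity
    rw [norm_div, Real.norm_eq_abs, Real.norm_eq_abs, abs_of_pos (by positivity : (0:ℝ) < (n:ℝ)^(1/2:ℝ)), div_le_iff₀ (by positivity), mul_assoc C', ← Real.rpow_add hn0]
    refine (h n hn).trans (le_of_eq ?_)
    norm_num
  have h2 : Tendsto (fun n : ℕ => ((n:ℝ)+2) * (n+1) * f (n+2) / (n:ℝ)^(1/2:ℝ)) atTop (𝓝 (b * L)) := by
    have := h1.add (hg.const_mul b)
    rw [zero_add] at this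
    refine this.congr fun n => ?_
    ring
  have h3 : Tendsto (fun n : ℕ => (((n:ℝ)+2)/(n+1))^(1/2:ℝ) * ((n:ℝ)/(n+1))^(1/2:ℝ)) atTop (𝓝 (1^(1/2:ℝ) * 1^(1/2:ℝ))) := by
    have e1 : Tendsto (fun n : ℕ => (n:ℝ)/(n+1)) atTop (𝓝 1) := tendsto_natCast_div_add_atTop (1:ℝ)
    have e2 : Tendsto (fun n : ℕ => ((n:ℝ)+2)/(n+1)) atTop (𝓝 1) := by
      have := (tendsto_const_nhds (x := (2:ℝ))).sub e1
      norm_num at this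
      refine this.congr fun n => ?_
      field_simp; ring
    exact (e2.rpow_const (by norm_num)).mul (e1.rpow_const (by norm_num))
  have := h2.mul h3
  simp only [Real.one_rpow, mul_one] at this
  refine this.congr' ?_
  filter_upwards [eventually_gt_atTop 0] with n hn
  have hn0 : (0:ℝ) < n := by exact_mod_cast hn
  push_cast
  rw [Real.div_rpow (by positivity) (by positivity), Real.div_rpow (by positivity) (by positivity)]
  have e : ((n:ℝ)+1)^(1/2:ℝ) * ((n:ℝ)+1)^(1/2:ℝ) = n + 1 := by
    rw [← Real.rpow_add (by positivity)]; norm_num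
  have e2 : ((n:ℝ)+2)^(3/2:ℝ) = (n+2) * ((n:ℝ)+2)^(1/2:ℝ) := by
    rw [show (3/2:ℝ) = 1 + 1/2 by norm_num, Real.rpow_add (by positivity), Real.rpow_one]
  rw [e2]
  have : ((n:ℝ)+1)^(1/2:ℝ) ≠ 0 := by positivity
  have : (n:ℝ)^(1/2:ℝ) ≠ 0 := by positivity
  have e3 : (((n:ℝ)+1)^(1/2:ℝ))^2 = n + 1 := by rw [sq]; exact e
  generalize ((n:ℝ)+1)^(1/2:ℝ) = w at *
  field_simp
  rw [e3]; ring

theorem A3_main (f : ℕ → ℝ) (hf0 : ∀ n, 0 ≤ f n) (hf1 : 0 < f 1) (hsum : HasSum f 1)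
    (F : ℂ → ℂ) (hF : F = fun s => ∑' n, (f n : ℂ) * s ^ n)
    (K : ℂ → ℂ) (R κ : ℝ) (hR : 1 < R) (hK : DifferentiableOn ℂ K (Metric.ball 0 R))
    (hκ : 0 < κ) (hK1 : K 1 = κ)
    (hode : ∀ s : ℂ, ‖s‖ < 1 → s * deriv F s * (1 - F s) = F s * K s) :
    ∃ A : ℝ, 0 < A ∧ Tendsto (fun n : ℕ => (n:ℝ)^(3/2:ℝ) * f n) atTop (𝓝 A) := by
  have hterm : ∀ s : ℂ, ‖s‖ ≤ 1 → ∀ n, ‖(f n : ℂ) * s ^ n‖ ≤ f n := fun s hs n => by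
    rw [norm_mul, norm_pow, Complex.norm_real, Real.norm_eq_abs, abs_of_nonneg (hf0 n)]
    exact mul_le_of_le_one_right (hf0 n) (pow_le_one₀ (norm_nonneg _) hs)
  have hsm : ∀ s : ℂ, ‖s‖ ≤ 1 → Summable fun n => (f n : ℂ) * s ^ n := fun s hs =>
    Summable.of_norm_bounded hsum.summable (hterm s hs)
  have hFn : ∀ s : ℂ, ‖s‖ ≤ 1 → ‖F s‖ ≤ 1 := fun s hs => by
    rw [hF]
    refine (tsum_of_norm_bounded hsum (hterm s hs))
  have hF1 : F 1 = 1 := by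
    rw [hF]; simp
    have := hsum.tsum_eq
    rw [← Complex.ofReal_tsum, this]; simp
  have hcont : ContinuousOn F (Metric.closedBall 0 1) := by
    rw [hF]
    apply continuousOn_tsum (u := f) (fun n => by fun_prop) hsum.summable
    intro n s hs
    exact hterm s (by simpa using hs) n
  have hps : HasFPowerSeriesOnBall F (FormalMultilinearSeries.ofScalars ℂ (fun n => (f n : ℂ))) 0 1 := by
    have hrad : (1:ENNReal) ≤ (FormalMultilinearSeries.ofScalars ℂ (fun n => (f n : ℂ))).radius := by
      have := FormalMultilinearSeries.le_radius_of_summable_norm (r := 1) (FormalMultilinearSeries.ofScalars ℂ (fun n => (f n : ℂ))) (by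
        simp only [FormalMultilinearSeries.ofScalars_norm]
        refine hsum.summable.congr fun n => ?_
        simp [abs_of_nonneg (hf0 n)])
      simpa using this
    have h1 := FormalMultilinearSeries.hasFPowerSeriesOnBall _ (lt_of_lt_of_le one_pos hrad)
    have h2 := h1.mono one_pos hrad
    convert! h2 using 1
    ext s
    rw [hF, FormalMultilinearSeries.sum]
    simp [FormalMultilinearSeries.ofScalars_apply_eq]
    exact tsum_congr fun n => mul_comm _ _
  have hFd : DifferentiableOn ℂ F (Metric.ball 0 1) := by
    have := hps.differentiableOn
    rwa [← Metric.eball_ofReal, ENNReal.ofReal_one]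
  have hcoef : ∀ n, iteratedDeriv n F 0 / (n.factorial:ℂ) = f n := by
    have := hps.analyticAt.hasFPowerSeriesAt.eq_formalMultilinearSeries hps.hasFPowerSeriesAt
    have := FormalMultilinearSeries.ofScalars_series_injective ℂ ℂ this
    exact fun n => congrFun this n
  -- the local analysis
  set M : ℂ → ℂ := fun s => K s / s with hMdef
  have hopen : IsOpen (Metric.ball (0:ℂ) R ∩ {0}ᶜ) := Metric.isOpen_ball.inter isOpen_compl_singleton
  have hMd : DifferentiableOn ℂ M (Metric.ball 0 R ∩ {0}ᶜ) := by
    intro s hs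
    exact ((hK s hs.1).mono Set.inter_subset_left).div differentiableWithinAt_id hs.2
  have h1mem : (1:ℂ) ∈ Metric.ball (0:ℂ) R ∩ {0}ᶜ := by simp [hR]
  obtain ⟨B, hB, hMB⟩ : ∃ B > 0, ∀ s : ℂ, 1/4 < ‖s‖ → ‖s‖ < 1 → DifferentiableAt ℂ M s ∧ ‖deriv M s‖ ≤ B ∧ ‖M s‖ ≤ B ∧ ‖M s - κ‖ ≤ B * ‖1 - s‖ := by
    set S : Set ℂ := Metric.closedBall 0 1 \ Metric.ball 0 (1/4) with hS
    have hSc : IsCompact S := (isCompact_closedBall _ _).diff Metric.isOpen_ball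
    have hSs : S ⊆ Metric.ball 0 R ∩ {0}ᶜ := by
      intro s hs
      refine ⟨Metric.closedBall_subset_ball hR hs.1, ?_⟩
      rintro rfl
      exact hs.2 (by simp)
    obtain ⟨B1, hB1⟩ := hSc.exists_bound_of_continuousOn (hMd.continuousOn.mono hSs)
    obtain ⟨B2, hB2⟩ := hSc.exists_bound_of_continuousOn ((hMd.deriv hopen).continuousOn.mono hSs)
    have hds : ContinuousOn (dslope M 1) (Metric.ball 0 R ∩ {0}ᶜ) :=
      (continuousOn_dslope (hopen.mem_nhds h1mem)).2 ⟨hMd.continuousOn, hMd.differentiableAt (hopen.mem_nhds h1mem)⟩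
    obtain ⟨B3, hB3⟩ := hSc.exists_bound_of_continuousOn (hds.mono hSs)
    refine ⟨max (max B1 B2) (max B3 1), by positivity, fun s hs hs1 => ?_⟩
    have hsS : s ∈ S := ⟨by simpa using hs1.le, by simpa using hs.le⟩
    refine ⟨hMd.differentiableAt (hopen.mem_nhds (hSs hsS)), ?_, ?_, ?_⟩
    · exact (hB2 s hsS).trans ((le_max_right _ _).trans (le_max_left _ _))
    · exact (hB1 s hsS).trans ((le_max_left _ _).trans (le_max_left _ _))
    · have h1 := hB3 s hsS
      have h2 := sub_smul_dslope M 1 s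
      have hM1 : M 1 = κ := by simp [hMdef, hK1]
      rw [← hM1, ← h2, norm_smul, norm_sub_rev, mul_comm]
      gcongr
      exact h1.trans ((le_max_left _ _).trans (le_max_right _ _))
  obtain ⟨C, hC⟩ := A2_local (fun s => 1 - F s) M κ (f 1) B hκ hf1 hB (hFd.const_sub 1)
    (fun s hs => by
      refine (norm_sub_le _ _).trans ?_
      have := hFn s hs.le
      simp; linarith)
    (by
      have h1 : ContinuousWithinAt F (Metric.closedBall 0 1) 1 := hcont 1 (by simp)
      have h2 : Tendsto (fun t : ℝ => (t:ℂ)) (𝓝[<] 1) (𝓝[Metric.closedBall 0 1] 1) := by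
        apply tendsto_nhdsWithin_of_tendsto_nhds_of_eventually_within
        · apply Tendsto.mono_left _ nhdsWithin_le_nhds
          have : Tendsto (fun t : ℝ => (t:ℂ)) (𝓝 1) (𝓝 ((1:ℝ):ℂ)) := Complex.continuous_ofReal.tendsto 1
          simpa using this
        · have h3 : ∀ᶠ t : ℝ in 𝓝[<] (1:ℝ), t < 1 := eventually_mem_nhdsWithin
          have h4 : ∀ᶠ t : ℝ in 𝓝[<] (1:ℝ), 0 < t := by
            apply eventually_nhdsWithin_of_eventually_nhds
            exact lt_mem_nhds one_pos
          filter_upwards [h3, h4] with t h3 h4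
          simp [abs_of_pos h4, h3.le]
      have := (tendsto_const_nhds (x := (1:ℂ))).sub (h1.tendsto.comp h2)
      rw [hF1, sub_self] at this
      exact this)
    (fun s hs => by
      have h1 : HasSum (fun n => f n - ((f n : ℂ) * s^n).re) (1 - (F s).re) := by
        apply hsum.sub
        have := (hsm s hs.le).hasSum
        have h2 : HasSum (fun n => (f n : ℂ) * s^n) (F s) := by rw [hF]; exact this
        exact Complex.hasSum_re h2
      have h2 : f 1 - ((f 1 : ℂ) * s^1).re ≤ 1 - (F s).re := by
        refine le_hasSum h1 1 fun n _ => ?_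
        have := (Complex.re_le_norm _).trans (hterm s hs.le n)
        linarith
      simp only [Complex.sub_re, Complex.one_re, pow_one, Complex.re_ofReal_mul] at h2 ⊢
      linarith)
    hMB
    (fun s hs hs1 => by
      have h1 := hode s hs1
      have hs0 : s ≠ 0 := by rintro rfl; norm_num at hs
      have : deriv (fun s => 1 - F s) s = - deriv F s := by simp
      rw [this]
      simp only [hMdef]
      field_simp
      linear_combination -h1)
  set c := Real.sqrt (2 * κ) with hc
  have hc0 : 0 < c := Real.sqrt_pos.2 (by linarith)
  set h : ℂ → ℂ := fun s => deriv (deriv F) s - (c/4 : ℝ) * (1 / (1 - s) ^ (3/2 : ℂ)) with hh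
  have hgps := one_div_one_sub_cpow_hasFPowerSeriesOnBall_zero (3/2)
  have hgd : DifferentiableOn ℂ (fun s : ℂ => 1 / (1 - s) ^ (3/2:ℂ)) (Metric.ball 0 1) := by
    have := hgps.differentiableOn
    rwa [← Metric.eball_ofReal, ENNReal.ofReal_one]
  have hF2d : DifferentiableOn ℂ (deriv (deriv F)) (Metric.ball 0 1) :=
    (hFd.deriv Metric.isOpen_ball).deriv Metric.isOpen_ball
  have hhd : DifferentiableOn ℂ h (Metric.ball 0 1) := hF2d.sub (hgd.const_mul _)
  have hb0 : Metric.ball (0:ℂ) 1 ∈ 𝓝 0 := Metric.ball_mem_nhds _ one_pos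
  obtain ⟨C', hC'⟩ := A1_coef_bound h hhd C (fun s hs hs1 => by
    have := hC s hs hs1
    have e : deriv (deriv fun s => 1 - F s) s = - deriv (deriv F) s := by
      have : (deriv fun s => 1 - F s) = fun s => - deriv F s := by ext s; simp
      rw [this]; simp
    rw [e] at this
    have e' : h s = -(-deriv (deriv F) s + (c/4 : ℝ) * (1 / (1 - s) ^ (3/2 : ℂ))) := by
      simp only [hh]; ring
    rw [e', norm_neg]
    convert this using 2)
  obtain ⟨L, hL, hLt⟩ := A1_choose_tendsto
  refine A3_final f (c/4) C' L (by positivity) hL _ hLt fun n hn => ?_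
  have h1 := hC' n hn
  have h2 : iteratedDeriv n h 0 / (n.factorial:ℂ) = iteratedDeriv n (deriv (deriv F)) 0 / (n.factorial:ℂ) - (c/4:ℝ) * Ring.choose ((3/2:ℂ) + n - 1) n := by
    have a1 := (hhd.analyticAt hb0).hasFPowerSeriesAt
    have a2 := (hF2d.analyticAt hb0).hasFPowerSeriesAt
    have a3 := hgps.hasFPowerSeriesAt.const_smul (c := ((c/4:ℝ):ℂ))
    have a4 := a2.sub a3
    rw [← FormalMultilinearSeries.ofScalars_smul, ← FormalMultilinearSeries.ofScalars_sub] at a4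
    have a5 := a1.eq_formalMultilinearSeries a4
    have := FormalMultilinearSeries.ofScalars_series_injective ℂ ℂ a5
    have := congrFun this n
    simpa using this
  have h3 : iteratedDeriv n (deriv (deriv F)) 0 / (n.factorial:ℂ) = ((n:ℂ)+2) * (n+1) * f (n+2) := by
    rw [← iteratedDeriv_succ', ← iteratedDeriv_succ', ← hcoef (n+2)]
    have : (n.factorial:ℂ) ≠ 0 := by exact_mod_cast n.factorial_ne_zero
    rw [Nat.factorial_succ, Nat.factorial_succ]
    have e1 : ((n:ℂ)+1+1) ≠ 0 := by exact_mod_cast (by omega : n + 1 + 1 ≠ 0)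
    have e3 : ((n:ℂ)+2) = n+1+1 := by ring
    rw [e3]
    have e2 : ((n:ℂ)+1) ≠ 0 := by exact_mod_cast (by omega : n + 1 ≠ 0)
    push_cast
    field_simp
  have h4 : Ring.choose ((3/2:ℂ) + n - 1) n = ((Ring.choose ((3/2:ℝ) + n - 1) n : ℝ) : ℂ) := by
    rw [Complex.ofReal_choose]; push_cast; rfl
  rw [h2, h3, h4] at h1
  have h5 : ((n:ℂ)+2) * (n+1) * f (n+2) - (c/4:ℝ) * ((Ring.choose ((3/2:ℝ) + n - 1) n : ℝ) : ℂ) = ((((n:ℝ)+2) * (n+1) * f (n+2) - (c/4) * Ring.choose ((3/2:ℝ) + n - 1) n : ℝ) : ℂ) := by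
    push_cast; ring
  rw [h5, Complex.norm_real, Real.norm_eq_abs] at h1
  exact h1
end A3


section B1
open Filter Topology

structure WTree (k : ℕ) (T : Type*) where
  s : T → ℕ
  s_pos : ∀ τ, 1 ≤ s τ
  fin : ∀ n, {τ | s τ = n}.Finite
  b : T → ℝ
  b_pos : ∀ τ, 0 < b τ
  b_le : ∀ τ, b τ ≤ 1
  m : T → T → ℕ
  add : T → T → T
  add_inj : ∀ σ, Function.Injective (fun τ => add τ σ)
  add_surj : ∀ τ σ, 1 ≤ m τ σ → ∃ τ', add τ' σ = τ
  m_add : ∀ τ σ, m (add τ σ) σ = m τ σ + 1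
  s_add : ∀ τ σ, s (add τ σ) = s τ + s σ
  b_add : ∀ τ σ, b (add τ σ) * ((m τ σ : ℝ) + 1) ^ k = b τ * b σ
  s_eq : ∀ τ, s τ = 1 + ∑ᶠ σ, m τ σ * s σ
  ex_one : ∃ τ, s τ = 1 ∧ b τ = 1
  ex_two : ∃ τ, s τ = 2 ∧ b τ = 1
  bd : ∃ C : ℝ, 1 ≤ C ∧ ∀ n, ∑ τ ∈ (fin n).toFinset, b τ ≤ C ^ n

namespace WTree
variable {k : ℕ} {T : Type*} (W : WTree k T)

lemma fin_le (N : ℕ) : {τ | W.s τ ≤ N}.Finite := by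
  have : {τ | W.s τ ≤ N} = ⋃ n ∈ Finset.range (N+1), {τ | W.s τ = n} := by
    ext τ; simp
  rw [this]
  exact Set.Finite.biUnion (Finset.finite_toSet _) fun n _ => W.fin n

noncomputable def upto (N : ℕ) : Finset T := (W.fin_le N).toFinset

lemma mem_upto {N : ℕ} {τ : T} : τ ∈ W.upto N ↔ W.s τ ≤ N := by simp [upto]

noncomputable def f (n : ℕ) : ℝ := ∑ τ ∈ (W.fin n).toFinset, W.b τ

lemma m_lt {τ σ : T} (h : W.m τ σ ≠ 0) : W.s σ < W.s τ := by
  obtain ⟨τ', rfl⟩ := W.add_surj τ σ (Nat.one_le_iff_ne_zero.2 h)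
  rw [W.s_add]
  have := W.s_pos τ'
  omega

lemma s_eq' {N : ℕ} {τ : T} (h : W.s τ ≤ N) : W.s τ = 1 + ∑ σ ∈ W.upto N, W.m τ σ * W.s σ := by
  conv_lhs => rw [W.s_eq τ]
  rw [finsum_eq_sum_of_support_subset]
  intro σ hσ
  simp only [Function.mem_support] at hσ
  have := W.m_lt (left_ne_zero_of_mul hσ)
  simp only [Finset.mem_coe, W.mem_upto]; omega

noncomputable def FN (N : ℕ) (x : ℝ) : ℝ := ∑ τ ∈ W.upto N, W.b τ * x ^ W.s τ
noncomputable def DN (N : ℕ) (x : ℝ) : ℝ := ∑ τ ∈ W.upto N, W.s τ * (W.b τ * x ^ W.s τ)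

lemma z_nonneg (τ : T) {x : ℝ} (hx : 0 ≤ x) : 0 ≤ W.b τ * x ^ W.s τ :=
  mul_nonneg (W.b_pos τ).le (pow_nonneg hx _)

lemma DN_le (hk : 1 ≤ k) (N : ℕ) {x : ℝ} (hx : 0 ≤ x) : W.DN N x ≤ W.FN N x + W.FN N x * W.DN N x := by
  have h1 : W.DN N x = W.FN N x + ∑ σ ∈ W.upto N, W.s σ * ∑ τ ∈ W.upto N, W.m τ σ * (W.b τ * x ^ W.s τ) := by
    have : W.DN N x = ∑ τ ∈ W.upto N, (1 + ∑ σ ∈ W.upto N, (W.m τ σ : ℝ) * W.s σ) * (W.b τ * x ^ W.s τ) := by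
      refine Finset.sum_congr rfl fun τ hτ => ?_
      have := W.s_eq' (W.mem_upto.1 hτ)
      have h2 : (W.s τ : ℝ) = 1 + ∑ σ ∈ W.upto N, (W.m τ σ : ℝ) * W.s σ := by exact_mod_cast this
      rw [← h2]
    rw [this]
    simp only [add_mul, one_mul, Finset.sum_add_distrib, Finset.sum_mul, Finset.mul_sum]
    congr 1
    rw [Finset.sum_comm]
    refine Finset.sum_congr rfl fun _ _ => Finset.sum_congr rfl fun _ _ => ?_
    ring
  rw [h1]
  gcongr
  rw [← h1, DN, Finset.mul_sum]
  refine Finset.sum_le_sum fun σ _ => ?_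
  rw [mul_left_comm]
  gcongr
  calc ∑ τ ∈ W.upto N, (W.m τ σ : ℝ) * (W.b τ * x ^ W.s τ)
      = ∑ τ ∈ (W.upto N).filter (fun τ => W.m τ σ ≠ 0), (W.m τ σ : ℝ) * (W.b τ * x ^ W.s τ) := by
        rw [Finset.sum_filter]
        refine Finset.sum_congr rfl fun τ _ => ?_
        split_ifs with h
        · rfl
        · push Not at h; simp [h]
    _ ≤ ∑ τ ∈ (W.upto N).image (fun τ => W.add τ σ), (W.m τ σ : ℝ) * (W.b τ * x ^ W.s τ) := by
        refine Finset.sum_le_sum_of_subset_of_nonneg ?_ fun τ _ _ => mul_nonneg (Nat.cast_nonneg _) (W.z_nonneg τ hx)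
        intro τ hτ
        rw [Finset.mem_filter] at hτ
        obtain ⟨τ', rfl⟩ := W.add_surj τ σ (Nat.one_le_iff_ne_zero.2 hτ.2)
        refine Finset.mem_image_of_mem _ (W.mem_upto.2 ?_)
        have := W.mem_upto.1 hτ.1
        rw [W.s_add] at this; omega
    _ = ∑ τ ∈ W.upto N, (W.m (W.add τ σ) σ : ℝ) * (W.b (W.add τ σ) * x ^ W.s (W.add τ σ)) := by
        rw [Finset.sum_image fun _ _ _ _ h => W.add_inj σ h]
    _ ≤ ∑ τ ∈ W.upto N, (W.b τ * x ^ W.s τ) * (W.b σ * x ^ W.s σ) := by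
        refine Finset.sum_le_sum fun τ _ => ?_
        rw [W.m_add, W.s_add, pow_add]
        have e := W.b_add τ σ
        have e2 : ((W.m τ σ : ℝ) + 1) ≤ ((W.m τ σ : ℝ) + 1) ^ k := le_self_pow₀ (by linarith [Nat.cast_nonneg (α := ℝ) (W.m τ σ)]) (by omega)
        push_cast
        calc _ = (W.b (W.add τ σ) * ((W.m τ σ : ℝ) + 1)) * (x ^ W.s τ * x ^ W.s σ) := by ring
          _ ≤ (W.b (W.add τ σ) * ((W.m τ σ : ℝ) + 1) ^ k) * (x ^ W.s τ * x ^ W.s σ) := by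
              have := (W.b_pos (W.add τ σ)).le
              gcongr
          _ = _ := by rw [e]; ring
    _ = W.FN N x * (W.b σ * x ^ W.s σ) := by rw [FN, Finset.sum_mul]

lemma FN_deriv (N : ℕ) {x : ℝ} (hx : 0 < x) : HasDerivAt (W.FN N) (W.DN N x / x) x := by
  have : HasDerivAt (fun x => ∑ τ ∈ W.upto N, W.b τ * x ^ W.s τ) (∑ τ ∈ W.upto N, W.b τ * (W.s τ * x ^ (W.s τ - 1))) x := by
    apply HasDerivAt.fun_sum
    intro τ _
    exact (hasDerivAt_pow _ _).const_mul _
  convert! this using 1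
  rw [DN, Finset.sum_div]
  refine Finset.sum_congr rfl fun τ _ => ?_
  have : x ^ W.s τ = x ^ (W.s τ - 1) * x := by
    rw [← pow_succ]; congr 1; have := W.s_pos τ; omega
  rw [this]; field_simp

lemma FN_mono (N : ℕ) {x y : ℝ} (hx : 0 ≤ x) (hxy : x ≤ y) : W.FN N x ≤ W.FN N y := by
  refine Finset.sum_le_sum fun τ _ => ?_
  have := (W.b_pos τ).le
  gcongr

lemma FN_eq (N : ℕ) (x : ℝ) : W.FN N x = ∑ n ∈ Finset.range (N+1), W.f n * x ^ n := by
  have : W.FN N x = ∑ n ∈ Finset.range (N+1), ∑ τ ∈ (W.upto N).filter (fun τ => W.s τ = n), W.b τ * x ^ W.s τ := by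
    rw [Finset.sum_fiberwise_of_maps_to]
    · rfl
    · intro τ hτ
      have := W.mem_upto.1 hτ
      simp; omega
  rw [this]
  refine Finset.sum_congr rfl fun n hn => ?_
  rw [f, Finset.sum_mul]
  apply Finset.sum_congr
  · ext τ
    simp only [Finset.mem_filter, W.mem_upto, Set.Finite.mem_toFinset, Set.mem_ofPred_eq]
    simp at hn
    omega
  · intro τ hτ
    simp at hτ
    rw [hτ]

lemma f_zero : W.f 0 = 0 := by
  rw [f]
  apply Finset.sum_eq_zero
  intro τ hτ
  simp at hτ
  have := W.s_pos τ
  omega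

lemma f_nonneg (n : ℕ) : 0 ≤ W.f n := Finset.sum_nonneg fun τ _ => (W.b_pos τ).le

lemma exists_rho (hk : 1 ≤ k) : ∃ ρ : ℝ, 0 < ρ ∧ ρ ≤ 0.62 ∧ HasSum (fun τ => W.b τ * ρ ^ W.s τ) 1 := by
  set S : Set ℝ := {x | 0 ≤ x ∧ ∀ N, W.FN N x ≤ 1} with hS
  have hub : ∀ x ∈ S, x ≤ 0.62 := by
    rintro x ⟨hx, h⟩
    obtain ⟨τ1, h1, b1⟩ := W.ex_one
    obtain ⟨τ2, h2, b2⟩ := W.ex_two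
    have hne : τ1 ≠ τ2 := by rintro rfl; omega
    have := h 2
    have h3 : ∑ τ ∈ {τ1, τ2}, W.b τ * x ^ W.s τ ≤ W.FN 2 x := by
      refine Finset.sum_le_sum_of_subset_of_nonneg ?_ fun τ _ _ => W.z_nonneg τ hx
      intro τ hτ
      simp at hτ
      rw [W.mem_upto]
      rcases hτ with rfl | rfl <;> omega
    rw [Finset.sum_pair hne, h1, h2, b1, b2] at h3
    by_contra hc
    push Not at hc
    nlinarith
  obtain ⟨C, hC, hCf⟩ := W.bd
  have hmem : 1 / (2 * C) ∈ S := by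
    refine ⟨by positivity, fun N => ?_⟩
    rw [FN_eq, Finset.sum_range_succ', W.f_zero]
    calc _ ≤ ∑ n ∈ Finset.range N, (1/2:ℝ)^(n+1) + 0 := by
          gcongr with n _
          · calc W.f (n+1) * (1 / (2*C))^(n+1) ≤ C^(n+1) * (1/(2*C))^(n+1) := by
                  gcongr; exact hCf _
              _ = (1/2:ℝ)^(n+1) := by
                  rw [← mul_pow]; congr 1; field_simp
          · simp
      _ ≤ 1 := by
          have : ∑ n ∈ Finset.range N, (1/2:ℝ)^(n+1) = 1 - (1/2)^N := by
            induction N with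
            | zero => simp
            | succ N ih => rw [Finset.sum_range_succ, ih]; ring
          rw [this]
          have : (0:ℝ) ≤ (1/2)^N := by positivity
          linarith
  have hbdd : BddAbove S := ⟨0.62, hub⟩
  have hcont : ∀ N, Continuous (W.FN N) := fun N => by unfold FN; fun_prop
  have hcl : IsClosed S := by
    have : S = {x | 0 ≤ x} ∩ ⋂ N, {x | W.FN N x ≤ 1} := by ext x; simp [hS]
    rw [this]
    exact (isClosed_le continuous_const continuous_id).inter
      (isClosed_iInter fun N => isClosed_le (hcont N) continuous_const)
  set ρ := sSup S with hρ
  have hρS : ρ ∈ S := hcl.csSup_mem ⟨_, hmem⟩ hbdd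
  have hρ0 : 0 < ρ := lt_of_lt_of_le (by positivity) (le_csSup hbdd hmem)
  have hz : ∀ τ, 0 ≤ W.b τ * ρ ^ W.s τ := fun τ => W.z_nonneg τ hρ0.le
  have hfin : ∀ u : Finset T, ∑ τ ∈ u, W.b τ * ρ ^ W.s τ ≤ W.FN (u.sup W.s) ρ := fun u => by
    refine Finset.sum_le_sum_of_subset_of_nonneg ?_ fun τ _ _ => hz τ
    intro τ hτ
    exact W.mem_upto.2 (Finset.le_sup hτ)
  have hsum : Summable (fun τ => W.b τ * ρ ^ W.s τ) :=
    summable_of_sum_le hz (c := 1) fun u => (hfin u).trans (hρS.2 _)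
  have hle : ∑' τ, W.b τ * ρ ^ W.s τ ≤ 1 :=
    hsum.tsum_le_of_sum_le fun u => (hfin u).trans (hρS.2 _)
  refine ⟨ρ, hρ0, hub _ hρS, ?_⟩
  have heq : ∑' τ, W.b τ * ρ ^ W.s τ = 1 := by
    by_contra hne
    set q := ∑' τ, W.b τ * ρ ^ W.s τ with hq
    have hq1 : q < 1 := lt_of_le_of_ne hle hne
    have hq0 : 0 ≤ q := tsum_nonneg hz
    have hqN : ∀ N, W.FN N ρ ≤ q := fun N => hsum.sum_le_tsum _ fun τ _ => hz τ
    set K := 1 / (ρ * ((1-q)/2)) with hK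
    have hK0 : 0 < K := by have : 0 < 1 - q := by linarith
                           positivity
    set x1 := ρ + (1-q)/2/K with hx1
    have hx1ρ : ρ < x1 := by
      have : 0 < (1-q)/2/K := by
        have : 0 < 1 - q := by linarith
        positivity
      linarith
    have : x1 ∈ S := by
      refine ⟨by linarith, fun N => ?_⟩
      have hB : ∀ x ≤ x1, q + K * (x - ρ) ≤ (1+q)/2 := fun x hx => by
        have : K * (x - ρ) ≤ K * (x1 - ρ) := by gcongr
        have h2 : K * (x1 - ρ) = (1-q)/2 := by rw [hx1]; field_simp; ring
        linarith
      have := image_le_of_deriv_right_lt_deriv_boundary (f := W.FN N) (f' := fun x => W.DN N x / x) (a := ρ) (b := x1)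
        (hcont N).continuousOn
        (fun x hx => (W.FN_deriv N (lt_of_lt_of_le hρ0 hx.1)).hasDerivWithinAt)
        (B := fun x => q + K * (x - ρ)) (B' := fun _ => K) (by simpa using hqN N)
        (fun x => by
          have := (((hasDerivAt_id x).sub_const ρ).const_mul K).const_add q
          simpa using this)
        (fun x hx he => by
          have hx0 : 0 < x := lt_of_lt_of_le hρ0 hx.1
          have h1 := W.DN_le hk N hx0.le
          have h2 := hB x hx.2.le
          rw [← he] at h2
          have h3 : W.DN N x * ((1-q)/2) ≤ W.FN N x := by
            have : 0 ≤ W.DN N x := Finset.sum_nonneg fun τ _ => mul_nonneg (Nat.cast_nonneg _) (W.z_nonneg τ hx0.le)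
            nlinarith
          have h4 : W.DN N x * ((1-q)/2) < 1 := by linarith
          rw [hK, div_lt_div_iff₀ hx0 (by have : 0 < 1 - q := by linarith
                                          positivity)]
          calc _ = ρ * (W.DN N x * ((1-q)/2)) := by ring
            _ < ρ * 1 := by gcongr
            _ ≤ 1 * x := by linarith [hx.1])
      have h5 := this ⟨hx1ρ.le, le_rfl⟩
      have h6 := hB x1 le_rfl
      linarith
    exact absurd (le_csSup hbdd this) (not_le.2 hx1ρ)
  rw [← heq]
  exact hsum.hasSum
end WTree
end B1


section B2
open Filter Topology

noncomputable def B2I (k : ℕ) (z : ℂ) : ℂ := ∑' j : ℕ, z ^ j / ((j.factorial : ℂ) ^ k)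
noncomputable def B2J (k : ℕ) (z : ℂ) : ℂ := ∑' j : ℕ, (j : ℂ) * (z ^ j / ((j.factorial : ℂ) ^ k))
noncomputable def B2nu (k : ℕ) (z : ℂ) : ℂ := (B2J k z - z * B2I k z) / B2I k z

variable {k : ℕ}

lemma B2_fac (hk : 1 ≤ k) (j : ℕ) : (j.factorial : ℝ) ≤ (j.factorial : ℝ) ^ k :=
  le_self_pow₀ (by exact_mod_cast j.factorial_pos) (by omega)

lemma B2_term (hk : 1 ≤ k) (z : ℂ) (j : ℕ) : ‖z ^ j / ((j.factorial : ℂ) ^ k)‖ ≤ ‖z‖ ^ j / (j.factorial : ℝ) := by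
  rw [norm_div, norm_pow, norm_pow, Complex.norm_natCast]
  have : (0:ℝ) < j.factorial := by exact_mod_cast j.factorial_pos
  have := B2_fac hk j
  gcongr

lemma B2_exp (t : ℝ) : HasSum (fun j : ℕ => t ^ j / (j.factorial : ℝ)) (Real.exp t) := by
  rw [Real.exp_eq_exp_ℝ]
  exact NormedSpace.expSeries_div_hasSum_exp t

lemma B2_sumI (hk : 1 ≤ k) (z : ℂ) : Summable (fun j : ℕ => z ^ j / ((j.factorial : ℂ) ^ k)) :=
  Summable.of_norm_bounded (B2_exp ‖z‖).summable (B2_term hk z)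

lemma B2_diffI (hk : 1 ≤ k) : Differentiable ℂ (B2I k) := by
  intro z
  have : DifferentiableOn ℂ (B2I k) (Metric.ball 0 (‖z‖+1)) := by
    apply Complex.differentiableOn_tsum_of_summable_norm (B2_exp (‖z‖+1)).summable (fun j => by fun_prop) Metric.isOpen_ball
    intro j w hw
    refine (B2_term hk w j).trans ?_
    have : ‖w‖ ≤ ‖z‖ + 1 := by simpa using (Metric.mem_ball.1 hw).le
    gcongr
  exact this.differentiableAt (Metric.isOpen_ball.mem_nhds (by simp))

/-- coefficients of J -/
lemma B2_jcoef (j : ℕ) (z : ℂ) : ((j+1 : ℕ) : ℂ) * (z ^ (j+1) / (((j+1).factorial : ℂ) ^ k)) =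
    z * (z ^ j * ((((j:ℝ)+1) / ((j+1).factorial : ℝ)^k : ℝ) : ℂ)) := by
  push_cast; ring

lemma B2_jc_nonneg (j : ℕ) : 0 ≤ ((j:ℝ)+1) / ((j+1).factorial : ℝ)^k := by positivity

lemma B2_jc_le (hk : 1 ≤ k) (j : ℕ) : ((j:ℝ)+1) / ((j+1).factorial : ℝ)^k ≤ 1 / (j.factorial : ℝ)^k := by
  rw [div_le_div_iff₀ (by positivity) (by positivity), Nat.factorial_succ]
  push_cast
  rw [mul_pow, one_mul]
  have : ((j:ℝ)+1) ≤ ((j:ℝ)+1)^k := le_self_pow₀ (by linarith [Nat.cast_nonneg (α := ℝ) j]) (by omega)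
  gcongr

lemma B2_jc_le' (hk : 1 ≤ k) (j : ℕ) : ((j:ℝ)+1) / ((j+1).factorial : ℝ)^k ≤ 1 / (j.factorial : ℝ) := by
  refine (B2_jc_le hk j).trans ?_
  have := B2_fac hk j
  gcongr

lemma B2_Jsum (hk : 1 ≤ k) (z : ℂ) : Summable (fun j : ℕ => (j : ℂ) * (z ^ j / ((j.factorial : ℂ) ^ k))) ∧
    HasSum (fun j : ℕ => z ^ j * ((((j:ℝ)+1) / ((j+1).factorial : ℝ)^k - 1 / (j.factorial : ℝ)^k : ℝ) : ℂ) * z) (B2J k z - z * B2I k z) := by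
  have h1 : Summable (fun j : ℕ => z ^ j * ((((j:ℝ)+1) / ((j+1).factorial : ℝ)^k : ℝ) : ℂ)) := by
    refine Summable.of_norm_bounded (B2_exp ‖z‖).summable fun j => ?_
    rw [norm_mul, norm_pow, Complex.norm_real, Real.norm_eq_abs, abs_of_nonneg (B2_jc_nonneg j), div_eq_mul_one_div (‖z‖ ^ j)]
    have := B2_jc_le' hk j
    gcongr
  have h2 : Summable (fun j : ℕ => (j : ℂ) * (z ^ j / ((j.factorial : ℂ) ^ k))) := by
    rw [← summable_nat_add_iff 1]
    refine (h1.mul_left z).congr fun j => ?_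
    rw [B2_jcoef]
  refine ⟨h2, ?_⟩
  have h3 : B2J k z = z * ∑' j : ℕ, z ^ j * ((((j:ℝ)+1) / ((j+1).factorial : ℝ)^k : ℝ) : ℂ) := by
    rw [B2J, h2.tsum_eq_zero_add, ← tsum_mul_left]
    simp only [Nat.cast_zero, zero_mul, zero_add]
    exact tsum_congr fun j => B2_jcoef j z
  rw [h3, B2I, ← mul_sub]
  have := ((h1.hasSum.sub (B2_sumI hk z).hasSum)).mul_left z
  convert! this using 1
  ext j
  push_cast
  ring

lemma B2_diffJ (hk : 1 ≤ k) : Differentiable ℂ (B2J k) := by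
  have h2 : B2J k = fun z => z * ∑' j : ℕ, z ^ j * ((((j:ℝ)+1) / ((j+1).factorial : ℝ)^k : ℝ) : ℂ) := by
    ext z
    rw [B2J, (B2_Jsum hk z).1.tsum_eq_zero_add, ← tsum_mul_left]
    simp only [Nat.cast_zero, zero_mul, zero_add]
    exact tsum_congr fun j => B2_jcoef j z
  rw [h2]
  apply differentiable_id.mul
  intro z
  have : DifferentiableOn ℂ (fun z : ℂ => ∑' j : ℕ, z ^ j * ((((j:ℝ)+1) / ((j+1).factorial : ℝ)^k : ℝ) : ℂ)) (Metric.ball 0 (‖z‖+1)) := by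
    apply Complex.differentiableOn_tsum_of_summable_norm (B2_exp (‖z‖+1)).summable (fun j => by fun_prop) Metric.isOpen_ball
    intro j w hw
    have : ‖w‖ ≤ ‖z‖ + 1 := by simpa using (Metric.mem_ball.1 hw).le
    rw [norm_mul, norm_pow, Complex.norm_real, Real.norm_eq_abs, abs_of_nonneg (B2_jc_nonneg j), div_eq_mul_one_div ((‖z‖+1) ^ j)]
    have := B2_jc_le' hk j
    gcongr
  exact this.differentiableAt (Metric.isOpen_ball.mem_nhds (by simp))

lemma B2_I_lower (hk : 1 ≤ k) (z : ℂ) : 2 - Real.exp ‖z‖ ≤ ‖B2I k z‖ := by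
  have h1 : B2I k z = 1 + ∑' j : ℕ, z ^ (j+1) / (((j+1).factorial : ℂ) ^ k) := by
    rw [B2I, (B2_sumI hk z).tsum_eq_zero_add]; simp
  have h2 : HasSum (fun j : ℕ => ‖z‖ ^ (j+1) / ((j+1).factorial : ℝ)) (Real.exp ‖z‖ - 1) := by
    have := (hasSum_nat_add_iff' 1).2 (B2_exp ‖z‖)
    simpa using this
  have h3 := tsum_of_norm_bounded h2 fun j => B2_term hk z (j+1)
  have h4 := norm_sub_norm_le (1:ℂ) (-(∑' j : ℕ, z ^ (j+1) / (((j+1).factorial : ℂ) ^ k)))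
  rw [sub_neg_eq_add, ← h1, norm_neg, norm_one] at h4
  linarith

lemma B2_exp65 : Real.exp 0.66 ≤ 1.95 := by
  have h := Real.exp_bound' (x := 0.66) (by norm_num) (by norm_num) (n := 5) (by norm_num)
  refine h.trans ?_
  norm_num [Finset.sum_range_succ, Nat.factorial]

lemma B2_I_lower' (hk : 1 ≤ k) (z : ℂ) (hz : ‖z‖ ≤ 0.66) : 0.05 ≤ ‖B2I k z‖ := by
  have h1 := B2_I_lower hk z
  have h2 : Real.exp ‖z‖ ≤ Real.exp 0.66 := Real.exp_le_exp.2 hz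
  have := B2_exp65
  linarith

lemma B2_H_bound (hk : 1 ≤ k) (z : ℂ) (hz : ‖z‖ ≤ 0.66) : ‖B2J k z - z * B2I k z‖ ≤ 2 * ‖z‖ ^ 2 := by
  have h1 := (B2_Jsum hk z).2
  have h2 : HasSum (fun j : ℕ => ‖z‖ ^ (j+1) / ((j+1).factorial : ℝ)) (Real.exp ‖z‖ - 1) := by
    have := (hasSum_nat_add_iff' 1).2 (B2_exp ‖z‖)
    simpa using this
  have h3 := (hasSum_nat_add_iff' 1).2 h1
  simp at h3
  have h4 := tsum_of_norm_bounded (h2.mul_right ‖z‖) (f := fun j : ℕ => z ^ (j+1) * ((((j+1:ℕ):ℝ)+1) / ((j+1+1).factorial : ℝ)^k - 1 / ((j+1).factorial : ℝ)^k : ℝ) * z) fun j => by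
    rw [norm_mul, norm_mul, norm_pow, Complex.norm_real, Real.norm_eq_abs, div_eq_mul_one_div (‖z‖ ^ (j+1))]
    have : |(((j+1:ℕ):ℝ)+1) / ((j+1+1).factorial : ℝ)^k - 1 / ((j+1).factorial : ℝ)^k| ≤ 1 / ((j+1).factorial : ℝ) := by
      have a1 := B2_jc_le hk (j+1)
      have a2 := B2_jc_nonneg (k := k) (j+1)
      have a3 : 1 / ((j+1).factorial : ℝ)^k ≤ 1 / ((j+1).factorial : ℝ) := by
        have := B2_fac hk (j+1)
        gcongr
      rw [abs_le]; constructor <;> linarith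
    gcongr
  have h5 : ∑' j : ℕ, z ^ (j+1) * ((((j+1:ℕ):ℝ)+1) / ((j+1+1).factorial : ℝ)^k - 1 / ((j+1).factorial : ℝ)^k : ℝ) * z = B2J k z - z * B2I k z := by
    rw [← h3.tsum_eq]
    refine tsum_congr fun j => ?_
    push_cast; ring
  rw [h5] at h4
  refine h4.trans ?_
  have h6 : Real.exp ‖z‖ - 1 ≤ 2 * ‖z‖ := by
    have := Real.abs_exp_sub_one_le (x := ‖z‖) (by rw [abs_of_nonneg (norm_nonneg _)]; linarith)
    rw [abs_of_nonneg (norm_nonneg z)] at this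
    exact (le_abs_self _).trans this
  calc _ ≤ 2 * ‖z‖ * ‖z‖ := by gcongr
    _ = _ := by ring

lemma B2_nu_bound (hk : 1 ≤ k) (z : ℂ) (hz : ‖z‖ ≤ 0.66) : ‖B2nu k z‖ ≤ 40 * ‖z‖ ^ 2 := by
  have h1 := B2_I_lower' hk z hz
  have h2 := B2_H_bound hk z hz
  rw [B2nu, norm_div, div_le_iff₀ (by linarith)]
  nlinarith [sq_nonneg ‖z‖]

lemma B2_nu_diff (hk : 1 ≤ k) (z : ℂ) (hz : ‖z‖ ≤ 0.66) : DifferentiableAt ℂ (B2nu k) z := by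
  have h0 : B2I k z ≠ 0 := by
    have h1 := B2_I_lower' hk z hz
    intro h; rw [h] at h1; norm_num at h1
  exact (((B2_diffJ hk) z).sub (differentiableAt_id.mul (B2_diffI hk z))).div (B2_diffI hk z) h0

lemma B2_nu_real (hk : 1 ≤ k) (t : ℝ) (ht : 0 ≤ t) : ∃ r : ℝ, B2nu k t = r ∧ -t^2 ≤ r := by
  set I : ℝ := ∑' j : ℕ, t ^ j / ((j.factorial : ℝ) ^ k) with hI
  set H : ℝ := ∑' j : ℕ, t ^ j * (((j:ℝ)+1) / ((j+1).factorial : ℝ)^k - 1 / (j.factorial : ℝ)^k) * t with hH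
  have e1 : B2I k t = I := by
    rw [hI, Complex.ofReal_tsum, B2I]; push_cast; rfl
  have e2 : B2J k t - t * B2I k t = H := by
    rw [hH, Complex.ofReal_tsum, ← (B2_Jsum hk t).2.tsum_eq]; push_cast; rfl
  have sI : Summable (fun j : ℕ => t ^ j / ((j.factorial : ℝ) ^ k)) := by
    have := B2_sumI hk (t:ℂ)
    rw [← Complex.summable_ofReal]
    refine this.congr fun j => by push_cast; rfl
  have sH : Summable (fun j : ℕ => t ^ j * (((j:ℝ)+1) / ((j+1).factorial : ℝ)^k - 1 / (j.factorial : ℝ)^k) * t) := by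
    have := (B2_Jsum hk (t:ℂ)).2.summable
    rw [← Complex.summable_ofReal]
    refine this.congr fun j => by push_cast; rfl
  have hI1 : 1 ≤ I := by
    have := sI.le_tsum 0 fun j _ => by positivity
    simpa using this
  have hIe : I ≤ Real.exp t := by
    rw [← (B2_exp t).tsum_eq]
    refine sI.tsum_le_tsum (fun j => ?_) (B2_exp t).summable
    have := B2_fac hk j
    gcongr
  have hHb : -(t * (I - 1)) ≤ H := by
    have h1 := sI.tsum_eq_zero_add
    have h2 := sH.tsum_eq_zero_add
    rw [← hI] at h1
    rw [← hH] at h2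
    simp at h1 h2
    rw [h1, h2, add_sub_cancel_left, ← tsum_mul_left, ← tsum_neg]
    have sI' := (summable_nat_add_iff 1).2 sI
    have sH' := (summable_nat_add_iff 1).2 sH
    refine Summable.tsum_le_tsum (fun j => ?_) (sI'.mul_left t).neg (by simpa using sH')
    have a2 := B2_jc_nonneg (k := k) (j+1)
    push_cast at a2
    have a3 : 0 ≤ t ^ (j+1) * (((j:ℝ)+1+1) / ((j+1+1).factorial : ℝ)^k) * t := by positivity
    rw [div_eq_mul_inv]
    linarith
  refine ⟨H / I, by rw [B2nu, e2, e1]; push_cast; rfl, ?_⟩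
  rw [le_div_iff₀ (by linarith)]
  have h7 : I - 1 ≤ t * I := by
    have h8 : 1 - t ≤ Real.exp (-t) := by have := Real.add_one_le_exp (-t); linarith
    have h9 : I * Real.exp (-t) ≤ 1 := by
      calc _ ≤ Real.exp t * Real.exp (-t) := by gcongr
        _ = 1 := by rw [← Real.exp_add]; simp
    nlinarith
  nlinarith
end B2


section B3
open Filter Topology

lemma B3_npow (r : ℝ) (h0 : 0 ≤ r) (h1 : r < 1) : ∃ C : ℝ, 0 ≤ C ∧ ∀ n : ℕ, (n:ℝ) * r ^ n ≤ C := by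
  obtain ⟨C, hC⟩ := (tendsto_self_mul_const_pow_of_lt_one h0 h1).bddAbove_range
  have h : ∀ n : ℕ, (n:ℝ) * r ^ n ≤ C := fun n => hC ⟨n, rfl⟩
  exact ⟨C, by simpa using h 0, h⟩

lemma B3_fiber {T : Type*} (g : T → ℂ) (hg : Summable g) (p : T → ℕ) :
    HasSum (fun j => ∑' τ, if p τ = j then g τ else 0) (∑' τ, g τ) := by
  have := hg.hasSum.tsum_fiberwise p
  convert! this using 1
  ext j
  rw [tsum_subtype]
  refine tsum_congr fun τ => ?_
  simp [Set.indicator_apply]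

lemma B3_77 (ρ : ℝ) (h0 : 0 ≤ ρ) (h1 : ρ ≤ 0.62) (n : ℕ) : (n:ℝ) * ρ ^ n ≤ 0.77 := by
  have : (n:ℝ) * ρ^n ≤ n * 0.62^n := by gcongr
  refine this.trans ?_
  have h2 : ∀ n : ℕ, ((n+2:ℕ):ℝ) * 0.62^(n+2) ≤ 0.77 := by
    intro n
    induction n with
    | zero => norm_num
    | succ n ih =>
      refine le_trans ?_ ih
      push_cast
      have : (0:ℝ) ≤ 0.62^(n+2) := by positivity
      rw [pow_succ _ (n+1+1)]
      have e : (0.62:ℝ)^(n+1+1) = 0.62^(n+2) := rfl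
      rw [e]
      nlinarith [Nat.cast_nonneg (α := ℝ) n, mul_nonneg (Nat.cast_nonneg (α := ℝ) n) this]
  match n with
  | 0 => norm_num
  | 1 => norm_num
  | n+2 => exact h2 n

namespace WTree
variable {k : ℕ} {T : Type*} (W : WTree k T)

lemma m_le (τ σ : T) : W.m τ σ ≤ W.s τ := by
  by_cases h : W.m τ σ = 0
  · omega
  have h1 := W.s_eq' (le_refl (W.s τ))
  have h2 := W.m_lt h
  have h3 : W.m τ σ * W.s σ ≤ ∑ σ ∈ W.upto (W.s τ), W.m τ σ * W.s σ :=
    Finset.single_le_sum (f := fun σ => W.m τ σ * W.s σ) (fun _ _ => Nat.zero_le _) (W.mem_upto.2 h2.le)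
  have h4 := W.s_pos σ
  nlinarith

/-- the coefficient identity for a single type -/
lemma M_eq (hk : 1 ≤ k) (z : T → ℂ) (hz : Summable z) (σ : T)
    (hm : Summable (fun τ => (W.m τ σ : ℂ) * z τ))
    (hadd : ∀ τ, z (W.add τ σ) * ((W.m τ σ : ℂ) + 1) ^ k = z τ * z σ) :
    (∑' τ, (W.m τ σ : ℂ) * z τ) * B2I k (z σ) = (∑' τ, z τ) * B2J k (z σ) := by
  set P : ℕ → ℂ := fun j => ∑' τ, if W.m τ σ = j then z τ else 0 with hP
  have hstep : ∀ j, P (j+1) * ((j:ℂ)+1)^k = P j * z σ := by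
    intro j
    have h1 : P (j+1) = ∑' τ, if W.m τ σ = j then z (W.add τ σ) else 0 := by
      rw [hP]
      simp only
      rw [← (W.add_inj σ).tsum_eq]
      · refine tsum_congr fun τ => ?_
        simp only [W.m_add, Nat.add_right_cancel_iff]
      · intro τ hτ
        simp only [Function.mem_support, ne_eq, ite_eq_right_iff, Classical.not_imp] at hτ
        obtain ⟨τ', h⟩ := W.add_surj τ σ (by omega)
        exact ⟨τ', h⟩
    rw [h1, hP]
    simp only
    rw [← tsum_mul_right, ← tsum_mul_right]
    refine tsum_congr fun τ => ?_
    split_ifs with h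
    · have := hadd τ
      rw [h] at this
      exact this
    · simp
  have hPj : ∀ j, P j = P 0 * (z σ ^ j / ((j.factorial : ℂ)^k)) := by
    intro j
    induction j with
    | zero => simp
    | succ j ih =>
      have h1 := hstep j
      have h2 : ((j:ℂ)+1) ≠ 0 := by exact_mod_cast Nat.succ_ne_zero j
      have h3 : (j.factorial : ℂ) ≠ 0 := by exact_mod_cast j.factorial_ne_zero
      rw [ih] at h1
      rw [Nat.factorial_succ]
      push_cast
      rw [mul_pow]
      field_simp at h1 ⊢
      rw [pow_succ]
      linear_combination h1
  have e1 : ∑' τ, z τ = P 0 * B2I k (z σ) := by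
    rw [← (B3_fiber z hz (fun τ => W.m τ σ)).tsum_eq, B2I, ← tsum_mul_left]
    exact tsum_congr hPj
  have e2 : ∑' τ, (W.m τ σ : ℂ) * z τ = P 0 * B2J k (z σ) := by
    rw [← (B3_fiber _ hm (fun τ => W.m τ σ)).tsum_eq, B2J, ← tsum_mul_left]
    refine tsum_congr fun j => ?_
    rw [mul_left_comm, ← hPj, hP]
    simp only
    rw [← tsum_mul_left]
    refine tsum_congr fun τ => ?_
    split_ifs with h
    · rw [h]
    · simp
  rw [e1, e2]; ring

lemma ode (hk : 1 ≤ k) (z : T → ℂ) (hz : Summable (fun τ => ‖z τ‖)) 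
    (hsz : Summable (fun τ => (W.s τ : ℝ) * ‖z τ‖))
    (hz66 : ∀ τ, ‖z τ‖ ≤ 0.66)
    (hadd : ∀ τ σ, z (W.add τ σ) * ((W.m τ σ : ℂ) + 1) ^ k = z τ * z σ)
    (hnu : Summable (fun σ => (W.s σ : ℂ) * B2nu k (z σ))) :
    (∑' τ, (W.s τ : ℂ) * z τ) * (1 - ∑' τ, z τ) = (∑' τ, z τ) * (1 + ∑' σ, (W.s σ : ℂ) * B2nu k (z σ)) := by
  have hz' : Summable z := hz.of_norm
  have hsz' : Summable (fun τ => (W.s τ : ℂ) * z τ) := by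
    apply Summable.of_norm
    simpa using hsz
  have hm : ∀ σ, Summable (fun τ => (W.m τ σ : ℂ) * z τ) := fun σ => by
    refine Summable.of_norm_bounded hsz fun τ => ?_
    rw [norm_mul, Complex.norm_natCast]
    have : (W.m τ σ : ℝ) ≤ W.s τ := by exact_mod_cast W.m_le τ σ
    gcongr
  have hM : ∀ σ, ∑' τ, (W.m τ σ : ℂ) * z τ = (∑' τ, z τ) * (z σ + B2nu k (z σ)) := fun σ => by
    have h1 := W.M_eq hk z hz' σ (hm σ) (fun τ => hadd τ σ)
    have h0 : B2I k (z σ) ≠ 0 := by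
      have h1 := B2_I_lower' hk _ (hz66 σ)
      intro h; rw [h] at h1; norm_num at h1
    rw [B2nu]
    field_simp
    rw [h1]; ring
  have hfs : ∀ τ (g : T → ℂ), HasSum (fun σ => (W.m τ σ : ℂ) * g σ) (∑ σ ∈ W.upto (W.s τ), (W.m τ σ : ℂ) * g σ) := fun τ g => by
    apply hasSum_sum_of_ne_finset_zero
    intro σ hσ
    rw [W.mem_upto] at hσ
    have : W.m τ σ = 0 := by
      by_contra h
      have := W.m_lt h
      omega
    simp [this]
  have hs1 : ∀ τ, HasSum (fun σ => (W.m τ σ : ℂ) * W.s σ) ((W.s τ : ℂ) - 1) := fun τ => by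
    have := hfs τ (fun σ => (W.s σ : ℂ))
    convert! this using 1
    have h2 := W.s_eq' (le_refl (W.s τ))
    have h3 : (W.s τ : ℂ) = 1 + ∑ σ ∈ W.upto (W.s τ), (W.m τ σ : ℂ) * W.s σ := by exact_mod_cast h2
    conv_lhs => rw [h3]
    ring
  have hs1R : ∀ τ, HasSum (fun σ => (W.m τ σ : ℝ) * W.s σ) ((W.s τ : ℝ) - 1) := fun τ => by
    have := Complex.hasSum_re (hs1 τ)
    convert! this using 1
    ext σ
    simp
  have hprod : Summable (Function.uncurry fun (τ σ : T) => (W.m τ σ : ℂ) * W.s σ * z τ) := by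
    apply Summable.of_norm
    rw [summable_prod_of_nonneg (fun _ => norm_nonneg _)]
    have e : ∀ τ, HasSum (fun σ => ‖Function.uncurry (fun (τ σ : T) => (W.m τ σ : ℂ) * W.s σ * z τ) (τ, σ)‖) (((W.s τ : ℝ) - 1) * ‖z τ‖) := fun τ => by
      have := (hs1R τ).mul_right ‖z τ‖
      convert! this using 1
      ext σ
      simp
    refine ⟨fun τ => (e τ).summable, ?_⟩
    refine (hsz.sub hz).congr fun τ => ?_
    rw [(e τ).tsum_eq]; ring
  have hcomm := hprod.tsum_comm
  have eL : ∑' τ, ∑' σ, (W.m τ σ : ℂ) * W.s σ * z τ = ∑' τ, (W.s τ : ℂ) * z τ - ∑' τ, z τ := by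
    rw [← hsz'.tsum_sub hz']
    refine tsum_congr fun τ => ?_
    rw [((hs1 τ).mul_right (z τ)).tsum_eq]; ring
  have eR : ∑' σ, ∑' τ, (W.m τ σ : ℂ) * W.s σ * z τ = (∑' τ, z τ) * (∑' τ, (W.s τ : ℂ) * z τ + ∑' σ, (W.s σ : ℂ) * B2nu k (z σ)) := by
    rw [← hsz'.tsum_add hnu, ← tsum_mul_left]
    refine tsum_congr fun σ => ?_
    calc _ = ∑' τ, (W.s σ : ℂ) * ((W.m τ σ : ℂ) * z τ) := tsum_congr fun τ => by ring
      _ = _ := by rw [tsum_mul_left, hM]; ring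
  rw [eL, eR] at hcomm
  linear_combination -hcomm

theorem asymp (hk : 1 ≤ k) : ∃ A ρ : ℝ, 0 < A ∧ 0 < ρ ∧
    Tendsto (fun n : ℕ => (n:ℝ)^(3/2:ℝ) * (W.f n * ρ ^ n)) atTop (𝓝 A) := by
  obtain ⟨ρ, hρ0, hρ1, hsum⟩ := W.exists_rho hk
  set c : T → ℝ := fun τ => W.b τ * ρ ^ W.s τ with hc
  have hc0 : ∀ τ, 0 < c τ := fun τ => mul_pos (W.b_pos τ) (pow_pos hρ0 _)
  have hcρ : ∀ τ, c τ ≤ ρ ^ W.s τ := fun τ => mul_le_of_le_one_left (by positivity) (W.b_le τ)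
  have hcadd : ∀ τ σ, c (W.add τ σ) * ((W.m τ σ : ℝ) + 1)^k = c τ * c σ := fun τ σ => by
    have := W.b_add τ σ
    simp only [hc, W.s_add, pow_add]
    linear_combination (ρ ^ W.s τ * ρ ^ W.s σ) * this
  set Z : ℂ → T → ℂ := fun w τ => (c τ : ℂ) * w ^ W.s τ with hZ
  have hZadd : ∀ w τ σ, Z w (W.add τ σ) * ((W.m τ σ : ℂ) + 1)^k = Z w τ * Z w σ := fun w τ σ => by
    have h : ((c (W.add τ σ) : ℝ) : ℂ) * ((W.m τ σ : ℂ) + 1)^k = c τ * c σ := by exact_mod_cast hcadd τ σ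
    simp only [hZ, W.s_add, pow_add]
    linear_combination (w ^ W.s τ * w ^ W.s σ) * h
  have hZn : ∀ w τ, ‖Z w τ‖ = c τ * ‖w‖ ^ W.s τ := fun w τ => by
    simp only [hZ]
    rw [norm_mul, norm_pow, Complex.norm_real, Real.norm_eq_abs, abs_of_pos (hc0 τ)]
  have hZ1 : ∀ w τ, ‖w‖ ≤ 1 → ‖Z w τ‖ ≤ c τ := fun w τ hw => by
    rw [hZn]
    exact mul_le_of_le_one_right (hc0 τ).le (pow_le_one₀ (norm_nonneg _) hw)
  -- the ball of radius R
  have hZR : ∀ w τ, ‖w‖ ≤ 1.04 → ‖Z w τ‖ ≤ 0.66 := fun w τ hw => by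
    rw [hZn]
    calc c τ * ‖w‖ ^ W.s τ ≤ 0.62 ^ W.s τ * 1.04 ^ W.s τ := by
          have : c τ ≤ 0.62 ^ W.s τ := (hcρ τ).trans (by gcongr)
          have := (hc0 τ).le
          gcongr
      _ = 0.6448 ^ W.s τ := by rw [← mul_pow]; norm_num
      _ ≤ 0.6448 ^ 1 := pow_le_pow_of_le_one (by norm_num) (by norm_num) (W.s_pos τ)
      _ ≤ 0.66 := by norm_num
  obtain ⟨C, hC0, hC⟩ := B3_npow 0.68 (by norm_num) (by norm_num)
  have hnub : ∀ w τ, ‖w‖ ≤ 1.04 → ‖(W.s τ : ℂ) * B2nu k (Z w τ)‖ ≤ (40 * C) * c τ := fun w τ hw => by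
    rw [norm_mul, Complex.norm_natCast]
    have h1 := B2_nu_bound hk _ (hZR w τ hw)
    rw [hZn] at h1
    calc _ ≤ (W.s τ : ℝ) * (40 * (c τ * ‖w‖ ^ W.s τ)^2) := by gcongr
      _ = 40 * ((W.s τ : ℝ) * (c τ * ((‖w‖^2) ^ W.s τ))) * c τ := by ring
      _ ≤ 40 * ((W.s τ : ℝ) * 0.68 ^ W.s τ) * c τ := by
          have h2 : c τ * ((‖w‖^2) ^ W.s τ) ≤ 0.68 ^ W.s τ := by
            calc _ ≤ (0.62:ℝ) ^ W.s τ * ((1.04:ℝ)^2) ^ W.s τ := by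
                  have : c τ ≤ 0.62 ^ W.s τ := (hcρ τ).trans (by gcongr)
                  have := (hc0 τ).le
                  gcongr
              _ ≤ (0.68:ℝ) ^ W.s τ := by
                  rw [← mul_pow]
                  gcongr
                  norm_num
          have := (hc0 τ).le
          gcongr
      _ ≤ _ := by
          have := (hc0 τ).le
          have := hC (W.s τ)
          gcongr
  set K : ℂ → ℂ := fun w => 1 + ∑' σ, (W.s σ : ℂ) * B2nu k (Z w σ) with hKdef
  have hnus : ∀ w, ‖w‖ ≤ 1.04 → Summable (fun σ => (W.s σ : ℂ) * B2nu k (Z w σ)) := fun w hw =>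
    Summable.of_norm_bounded (hsum.summable.mul_left (40 * C)) fun τ => hnub w τ hw
  have hKd : DifferentiableOn ℂ K (Metric.ball 0 1.04) := by
    apply DifferentiableOn.const_add
    apply Complex.differentiableOn_tsum_of_summable_norm (hsum.summable.mul_left (40 * C)) _ Metric.isOpen_ball
    · intro τ w hw
      exact hnub w τ (by simpa using (Metric.mem_ball.1 hw).le)
    · intro τ w hw
      have h1 := B2_nu_diff hk _ (hZR w τ (by simpa using (Metric.mem_ball.1 hw).le))
      have h2 : DifferentiableAt ℂ (fun w => Z w τ) w := by simp only [hZ]; fun_prop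
      exact ((h1.comp w h2).const_mul _).differentiableWithinAt
  have hK1 : ∃ κ : ℝ, 0 < κ ∧ K 1 = κ := by
    have h1 : ∀ τ, ∃ r : ℝ, B2nu k (Z 1 τ) = r ∧ -(c τ)^2 ≤ r := fun τ => by
      have := B2_nu_real hk (c τ) (hc0 τ).le
      simpa [hZ] using this
    choose r hr hrc using h1
    have hs := hnus 1 (by norm_num)
    simp only [hr] at hs
    have hs' : Summable (fun τ => (W.s τ : ℝ) * r τ) := by
      rw [← Complex.summable_ofReal]
      refine hs.congr fun τ => by push_cast; rfl
    refine ⟨1 + ∑' τ, (W.s τ : ℝ) * r τ, ?_, ?_⟩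
    · have h2 : ∑' τ, -(0.77 * c τ) ≤ ∑' τ, (W.s τ : ℝ) * r τ := by
        refine Summable.tsum_le_tsum (fun τ => ?_) (hsum.summable.mul_left 0.77).neg hs'
        have h3 := B3_77 ρ hρ0.le hρ1 (W.s τ)
        have h4 : (W.s τ : ℝ) * c τ ≤ 0.77 := le_trans (by have := hcρ τ; gcongr) h3
        have h5 : (W.s τ : ℝ) * (-(c τ)^2) ≤ W.s τ * r τ := by
          have := hrc τ
          gcongr
        have := hc0 τ
        nlinarith
      rw [tsum_neg, tsum_mul_left, hsum.tsum_eq] at h2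
      linarith
    · rw [hKdef]
      simp only [hr]
      push_cast
      rfl
  obtain ⟨κ, hκ, hK1⟩ := hK1
  -- relation with the power series
  set g : ℕ → ℝ := fun n => W.f n * ρ ^ n with hg
  have hfib : ∀ w : ℂ, ‖w‖ ≤ 1 → HasSum (fun n => (g n : ℂ) * w ^ n) (∑' τ, Z w τ) := fun w hw => by
    have h1 : Summable (Z w) := Summable.of_norm_bounded hsum.summable fun τ => hZ1 w τ hw
    have := B3_fiber (Z w) h1 W.s
    convert! this using 1
    ext n
    rw [tsum_eq_sum (s := (W.fin n).toFinset)]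
    · simp only [hg, f]
      push_cast
      rw [Finset.sum_mul, Finset.sum_mul]
      refine Finset.sum_congr rfl fun τ hτ => ?_
      simp at hτ
      simp only [hZ, hc, hτ, if_true]
      push_cast; ring
    · intro τ hτ
      simp at hτ
      simp [hτ]
  have hg1 : HasSum g 1 := by
    have := hfib 1 (by simp)
    have e : ∑' τ, Z 1 τ = ((1:ℝ):ℂ) := by
      simp only [hZ, one_pow, mul_one]
      rw [← Complex.ofReal_tsum, hsum.tsum_eq]
    rw [e] at this
    simp only [one_pow, mul_one] at this
    exact_mod_cast this
  set F : ℂ → ℂ := fun s => ∑' n, (g n : ℂ) * s ^ n with hF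
  have hFZ : ∀ w : ℂ, ‖w‖ ≤ 1 → F w = ∑' τ, Z w τ := fun w hw => (hfib w hw).tsum_eq
  have := A3_main g (fun n => mul_nonneg (W.f_nonneg n) (by positivity)) (by
      obtain ⟨τ, h1, h2⟩ := W.ex_one
      have : 0 < W.f 1 := Finset.sum_pos (fun τ _ => W.b_pos τ) ⟨τ, by simp [h1]⟩
      positivity) hg1 F hF K 1.04 κ (by norm_num) hKd hκ hK1 (fun w hw => by
      have h1 := W.ode hk (Z w) (Summable.of_nonneg_of_le (fun _ => norm_nonneg _) (fun τ => hZ1 w τ hw.le) hsum.summable)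
        (by
          obtain ⟨C, hC0, hC⟩ := B3_npow ‖w‖ (norm_nonneg _) hw
          refine Summable.of_nonneg_of_le (fun _ => by positivity) (fun τ => ?_) (hsum.summable.mul_left C)
          rw [hZn, mul_left_comm, mul_comm]
          exact mul_le_mul_of_nonneg_right (hC _) (hc0 τ).le)
        (fun τ => hZR w τ (by linarith)) (hZadd w) (hnus w (by linarith))
      have h2 : w * deriv F w = ∑' τ, (W.s τ : ℂ) * Z w τ := by
        have h3 : F =ᶠ[𝓝 w] fun w => ∑' τ, Z w τ := by
          filter_upwards [Metric.isOpen_ball.mem_nhds (show w ∈ Metric.ball (0:ℂ) 1 by simpa using hw)] with v hv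
          exact hFZ v (by simpa using (Metric.mem_ball.1 hv).le)
        rw [h3.deriv_eq]
        have h4 := Complex.hasSum_deriv_of_summable_norm (F := fun τ w => Z w τ) (U := Metric.ball 0 1) (z := w) hsum.summable (fun τ => by simp only [hZ]; fun_prop) Metric.isOpen_ball
          (fun τ v hv => hZ1 v τ (by simpa using (Metric.mem_ball.1 hv).le)) (by simpa using hw)
        rw [← (h4.mul_left w).tsum_eq]
        refine tsum_congr fun τ => ?_
        have h5 : deriv (fun w => Z w τ) w = (c τ : ℂ) * (W.s τ * w ^ (W.s τ - 1)) := by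
          simp [hZ]
        rw [h5]
        simp only [hZ]
        have h6 : w ^ W.s τ = w ^ (W.s τ - 1) * w := by
          rw [← pow_succ]; congr 1; have := W.s_pos τ; omega
        rw [h6]; ring
      rw [h2, hFZ w hw.le]
      exact h1)
  obtain ⟨A, hA, h⟩ := this
  exact ⟨A, ρ, hA, hρ0, h⟩
end WTree
end B3


section C1

structure PT where
  V : Type
  fin : Finite V
  f : V → V
  r : V
  fr : f r = r
  reach : ∀ v, ∃ k, f^[k] v = r

attribute [instance] PT.fin

namespace PT

def Iso (P Q : PT) : Prop := ∃ e : P.V ≃ Q.V, ∀ v, e (P.f v) = Q.f (e v)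

lemma Iso.refl (P : PT) : P.Iso P := ⟨Equiv.refl _, fun _ => rfl⟩
lemma Iso.symm {P Q : PT} : P.Iso Q → Q.Iso P := by
  rintro ⟨e, he⟩
  refine ⟨e.symm, fun v => ?_⟩
  rw [Equiv.symm_apply_eq, he, Equiv.apply_symm_apply]
lemma Iso.trans {P Q R : PT} : P.Iso Q → Q.Iso R → P.Iso R := by
  rintro ⟨e, he⟩ ⟨e', he'⟩
  exact ⟨e.trans e', fun v => by simp [he, he']⟩

lemma fix (P : PT) {v : P.V} (h : P.f v = v) : v = P.r := by
  obtain ⟨k, hk⟩ := P.reach v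
  rw [Function.iterate_fixed h] at hk
  exact hk

lemma map_root {P Q : PT} (e : P.V ≃ Q.V) (he : ∀ v, e (P.f v) = Q.f (e v)) : e P.r = Q.r := by
  apply Q.fix
  rw [← he, P.fr]

/-- descendants of c -/
def InB (P : PT) (c v : P.V) : Prop := ∃ k, P.f^[k] v = c

lemma inB_self (P : PT) (c : P.V) : P.InB c c := ⟨0, rfl⟩

lemma inB_of_f {P : PT} {c v : P.V} (h : P.InB c (P.f v)) : P.InB c v := by
  obtain ⟨k, hk⟩ := h
  exact ⟨k+1, hk⟩

lemma inB_f {P : PT} {c v : P.V} (h : P.InB c v) (hv : v ≠ c) : P.InB c (P.f v) := by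
  obtain ⟨k, hk⟩ := h
  cases k with
  | zero => exact absurd hk hv
  | succ k => exact ⟨k, hk⟩

lemma iter_r (P : PT) (k : ℕ) : P.f^[k] P.r = P.r := Function.iterate_fixed P.fr k

lemma not_inB_r {P : PT} {c : P.V} (hc : c ≠ P.r) : ¬ P.InB c P.r := by
  rintro ⟨k, hk⟩
  rw [P.iter_r] at hk
  exact hc hk.symm

/-- c is a child of the root -/
def IsCh (P : PT) (c : P.V) : Prop := c ≠ P.r ∧ P.f c = P.r

lemma not_inB_ch {P : PT} {c d : P.V} (hc : P.IsCh c) (hd : P.IsCh d) (h : P.InB d c) : d = c := by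
  by_contra hne
  have := inB_f h (Ne.symm hne)
  rw [hc.2] at this
  exact not_inB_r hd.1 this

lemma inB_disj {P : PT} {c d : P.V} (hc : P.IsCh c) (hd : P.IsCh d) {v : P.V} (h1 : P.InB c v) (h2 : P.InB d v) : c = d := by
  obtain ⟨k, hk⟩ := h1
  induction k generalizing v with
  | zero =>
    simp at hk; subst hk
    exact (not_inB_ch hc hd h2).symm
  | succ k ih =>
    by_cases hv : v = d
    · subst hv
      exact not_inB_ch hd hc ⟨_, hk⟩
    · exact ih (inB_f h2 hv) hk

noncomputable def branch (P : PT) (c : P.V) : PT where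
  V := {v // P.InB c v}
  fin := inferInstance
  f v := if h : v.1 = c then ⟨c, P.inB_self c⟩ else ⟨P.f v.1, inB_f v.2 h⟩
  r := ⟨c, P.inB_self c⟩
  fr := by simp
  reach := by
    rintro ⟨v, k, hk⟩
    induction k generalizing v with
    | zero => exact ⟨0, Subtype.ext hk⟩
    | succ k ih =>
      by_cases h : v = c
      · exact ⟨0, Subtype.ext h⟩
      · obtain ⟨j, hj⟩ := ih (P.f v) hk
        refine ⟨j+1, ?_⟩
        rw [Function.iterate_succ_apply]
        simp only [h, dif_neg, not_false_eq_true]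
        exact hj

lemma branch_f_root {P : PT} {c : P.V} {v : (P.branch c).V} (h : v.1 = c) : (P.branch c).f v = (P.branch c).r := by
  simp [branch, h]
lemma branch_f_ne {P : PT} {c : P.V} {v : (P.branch c).V} (h : v.1 ≠ c) : ((P.branch c).f v).1 = P.f v.1 := by
  simp [branch, h]

noncomputable def rest (P : PT) (c : P.V) (hc : c ≠ P.r) : PT where
  V := {v // ¬ P.InB c v}
  fin := inferInstance
  f v := ⟨P.f v.1, fun h => v.2 (inB_of_f h)⟩
  r := ⟨P.r, not_inB_r hc⟩
  fr := Subtype.ext P.fr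
  reach := by
    rintro ⟨v, hv⟩
    obtain ⟨k, hk⟩ := P.reach v
    refine ⟨k, Subtype.ext (Eq.trans ?_ hk)⟩
    clear hk
    induction k generalizing v with
    | zero => rfl
    | succ k ih =>
      rw [Function.iterate_succ_apply, Function.iterate_succ_apply]
      exact ih (P.f v) (fun h => hv (inB_of_f h))

@[simp] lemma rest_f {P : PT} {c : P.V} {hc : c ≠ P.r} (v : (P.rest c hc).V) : ((P.rest c hc).f v).1 = P.f v.1 := rfl

noncomputable def gf (P Q : PT) : P.V ⊕ Q.V → P.V ⊕ Q.V := Sum.elim (fun v => Sum.inl (P.f v)) (fun w => if w = Q.r then Sum.inl P.r else Sum.inr (Q.f w))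

lemma gf_inl (P Q : PT) (v : P.V) : gf P Q (Sum.inl v) = Sum.inl (P.f v) := rfl
lemma gf_inr_r (P Q : PT) : gf P Q (Sum.inr Q.r) = Sum.inl P.r := by simp [gf]
lemma gf_inr (P Q : PT) {w : Q.V} (h : w ≠ Q.r) : gf P Q (Sum.inr w) = Sum.inr (Q.f w) := by simp [gf, h]

noncomputable def graft (P Q : PT) : PT where
  V := P.V ⊕ Q.V
  fin := inferInstance
  f := gf P Q
  r := Sum.inl P.r
  fr := by rw [gf_inl, P.fr]
  reach := by
    rintro (v | w)
    · obtain ⟨k, hk⟩ := P.reach v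
      refine ⟨k, ?_⟩
      rw [← hk]; clear hk
      induction k generalizing v with
      | zero => rfl
      | succ k ih => rw [Function.iterate_succ_apply, Function.iterate_succ_apply, gf_inl, ih]
    · obtain ⟨k, hk⟩ := Q.reach w
      induction k generalizing w with
      | zero =>
        simp at hk; subst hk
        exact ⟨1, gf_inr_r P Q⟩
      | succ k ih =>
        by_cases h : w = Q.r
        · subst h; exact ⟨1, gf_inr_r P Q⟩
        · obtain ⟨j, hj⟩ := ih (Q.f w) hk
          exact ⟨j+1, by rw [Function.iterate_succ_apply, gf_inr _ _ h, hj]⟩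

lemma graft_congr {P Q P' Q' : PT} (h : P.Iso P') (h' : Q.Iso Q') : (graft P Q).Iso (graft P' Q') := by
  obtain ⟨e, he⟩ := h
  obtain ⟨e', he'⟩ := h'
  refine ⟨Equiv.sumCongr e e', ?_⟩
  rintro (v | w)
  · change Equiv.sumCongr e e' (gf P Q (Sum.inl v)) = gf P' Q' (Sum.inl (e v))
    rw [gf_inl, gf_inl]; simp [he]
  · change Equiv.sumCongr e e' (gf P Q (Sum.inr w)) = gf P' Q' (Sum.inr (e' w))
    by_cases hw : w = Q.r
    · subst hw
      rw [gf_inr_r, map_root e' he', gf_inr_r]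
      simp [map_root e he]
    · rw [gf_inr _ _ hw, gf_inr]
      · simp [he']
      · rw [← map_root e' he']; exact fun h => hw (e'.injective h)

lemma graft_rest_branch (H : PT) (c : H.V) (hc : H.IsCh c) : (graft (H.rest c hc.1) (H.branch c)).Iso H := by
  refine ⟨(Equiv.sumComm _ _).trans (Equiv.sumCompl (fun v => H.InB c v)), ?_⟩
  rintro (v | w)
  · rfl
  · change _ = H.f w.1
    by_cases hw : w.1 = c
    · have : w = (H.branch c).r := Subtype.ext hw
      subst this
      change (Equiv.sumCompl (fun v => H.InB c v)) (Sum.swap (gf (H.rest c hc.1) (H.branch c) (Sum.inr (H.branch c).r) : (H.rest c hc.1).V ⊕ (H.branch c).V)) = _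
      rw [gf_inr_r]; exact hc.2.symm
    · have : w ≠ (H.branch c).r := fun h => hw (congrArg Subtype.val h)
      change (Equiv.sumCompl (fun v => H.InB c v)) (Sum.swap (gf (H.rest c hc.1) (H.branch c) (Sum.inr w) : (H.rest c hc.1).V ⊕ (H.branch c).V)) = _
      rw [gf_inr _ _ this]
      exact branch_f_ne hw

lemma inB_map {P Q : PT} (e : P.V ≃ Q.V) (he : ∀ v, e (P.f v) = Q.f (e v)) (c v : P.V) : P.InB c v ↔ Q.InB (e c) (e v) := by
  have : ∀ k v, e (P.f^[k] v) = Q.f^[k] (e v) := by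
    intro k
    induction k with
    | zero => intro v; rfl
    | succ k ih => intro v; rw [Function.iterate_succ_apply, Function.iterate_succ_apply, ih, he]
  unfold InB
  refine exists_congr fun k => ?_
  rw [← this]
  simp

lemma isCh_map {P Q : PT} (e : P.V ≃ Q.V) (he : ∀ v, e (P.f v) = Q.f (e v)) (c : P.V) : P.IsCh c ↔ Q.IsCh (e c) := by
  unfold IsCh
  rw [← he, ← map_root e he]; simp

lemma branch_map {P Q : PT} (e : P.V ≃ Q.V) (he : ∀ v, e (P.f v) = Q.f (e v)) (c : P.V) : (P.branch c).Iso (Q.branch (e c)) := by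
  refine ⟨e.subtypeEquiv (inB_map e he c), fun v => ?_⟩
  apply Subtype.ext
  by_cases hv : v.1 = c
  · rw [branch_f_root hv, branch_f_root (congrArg e hv)]; rfl
  · rw [branch_f_ne (fun h => hv (e.injective h))]
    change e ((P.branch c).f v).1 = Q.f (e v.1)
    rw [branch_f_ne hv, he]

lemma rest_map {P Q : PT} (e : P.V ≃ Q.V) (he : ∀ v, e (P.f v) = Q.f (e v)) (c : P.V) (hc : c ≠ P.r) (hc' : e c ≠ Q.r) :
    (P.rest c hc).Iso (Q.rest (e c) hc') := by
  refine ⟨e.subtypeEquiv (fun v => not_congr (inB_map e he c v)), fun v => ?_⟩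
  apply Subtype.ext
  exact he v.1

/-- swapping two isomorphic branches -/
lemma swap (H : PT) (c d : H.V) (hc : H.IsCh c) (hd : H.IsCh d) (h : (H.branch c).Iso (H.branch d)) :
    ∃ e : H.V ≃ H.V, (∀ v, e (H.f v) = H.f (e v)) ∧ e c = d := by
  by_cases hcd : c = d
  · exact ⟨Equiv.refl _, fun _ => rfl, hcd⟩
  obtain ⟨φ, hφ⟩ := h
  have hdisj : ∀ v, H.InB c v → H.InB d v → False := fun v h1 h2 => hcd (inB_disj hc hd h1 h2)
  set g : H.V → H.V := fun v => if h : H.InB c v then (φ ⟨v, h⟩).1 else if h : H.InB d v then (φ.symm ⟨v, h⟩).1 else v with hg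
  have g1 : ∀ v (h : H.InB c v), g v = (φ ⟨v, h⟩).1 := fun v h => by simp [hg, h]
  have g2 : ∀ v (h : H.InB d v), g v = (φ.symm ⟨v, h⟩).1 := fun v h => by
    have : ¬ H.InB c v := fun h' => hdisj v h' h
    simp [hg, h, this]
  have g3 : ∀ v, ¬ H.InB c v → ¬ H.InB d v → g v = v := fun v h h' => by simp [hg, h, h']
  have hinv : Function.Involutive g := by
    intro v
    by_cases h1 : H.InB c v
    · rw [g1 v h1, g2 _ (φ ⟨v, h1⟩).2]; exact congrArg Subtype.val (φ.symm_apply_apply ⟨v, h1⟩)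
    by_cases h2 : H.InB d v
    · rw [g2 v h2, g1 _ (φ.symm ⟨v, h2⟩).2]; exact congrArg Subtype.val (φ.apply_symm_apply ⟨v, h2⟩)
    · rw [g3 v h1 h2, g3 v h1 h2]
  have hφr := map_root φ hφ
  have hφs : ∀ w, φ.symm ((H.branch d).f w) = (H.branch c).f (φ.symm w) := fun w => by
    rw [Equiv.symm_apply_eq, hφ, Equiv.apply_symm_apply]
  have hφrs := map_root φ.symm hφs
  have gr : g H.r = H.r := g3 _ (not_inB_r hc.1) (not_inB_r hd.1)
  have gc : g c = d := by
    rw [g1 c (H.inB_self c)]; exact congrArg Subtype.val hφr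
  refine ⟨hinv.toPerm g, ?_, gc⟩
  intro v
  change g (H.f v) = H.f (g v)
  by_cases h1 : H.InB c v
  · by_cases hv : v = c
    · subst hv; rw [gc, hc.2, hd.2, gr]
    · have h2 : φ ⟨v, h1⟩ ≠ (H.branch d).r := by
        rw [← hφr]; intro h; apply hv; exact congrArg Subtype.val (φ.injective h)
      have h2' : (φ ⟨v, h1⟩).1 ≠ d := fun h => h2 (Subtype.ext h)
      rw [g1 v h1, g1 _ (inB_f h1 hv), ← branch_f_ne h2']
      refine Eq.trans ?_ (congrArg Subtype.val (hφ ⟨v, h1⟩))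
      refine congrArg (fun x => (φ x).1) ?_
      apply Subtype.ext
      exact (branch_f_ne (P := H) (c := c) (v := ⟨v, h1⟩) hv).symm
  by_cases h2 : H.InB d v
  · by_cases hv : v = d
    · subst hv; rw [← gc, hinv c, gc, hc.2, hd.2, gr]
    · have h3 : φ.symm ⟨v, h2⟩ ≠ (H.branch c).r := by
        rw [← hφrs]; intro h; apply hv; exact congrArg Subtype.val (φ.symm.injective h)
      have h3' : (φ.symm ⟨v, h2⟩).1 ≠ c := fun h => h3 (Subtype.ext h)
      rw [g2 v h2, g2 _ (inB_f h2 hv), ← branch_f_ne h3']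
      refine Eq.trans ?_ (congrArg Subtype.val (hφs ⟨v, h2⟩))
      refine congrArg (fun x => (φ.symm x).1) ?_
      apply Subtype.ext
      exact (branch_f_ne (P := H) (c := d) (v := ⟨v, h2⟩) hv).symm
  · rw [g3 v h1 h2, g3 _ (fun h => h1 (inB_of_f h)) (fun h => h2 (inB_of_f h))]

/-- the facts about a graft -/
lemma graft_isCh_inl (P Q : PT) (c : P.V) : (graft P Q).IsCh (Sum.inl c) ↔ P.IsCh c := by
  unfold IsCh
  change (Sum.inl c ≠ (Sum.inl P.r : P.V ⊕ Q.V) ∧ (Sum.inl (P.f c) : P.V ⊕ Q.V) = Sum.inl P.r) ↔ _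
  simp

lemma graft_isCh_inr (P Q : PT) (w : Q.V) : (graft P Q).IsCh (Sum.inr w) ↔ w = Q.r := by
  unfold IsCh
  change (Sum.inr w ≠ (Sum.inl P.r : P.V ⊕ Q.V) ∧ gf P Q (Sum.inr w) = Sum.inl P.r) ↔ _
  simp [gf]

lemma graft_inB_inl_inl (P Q : PT) (c v : P.V) : (graft P Q).InB (Sum.inl c) (Sum.inl v) ↔ P.InB c v := by
  unfold InB
  refine exists_congr fun k => ?_
  have : ∀ v, (graft P Q).f^[k] (Sum.inl v) = Sum.inl (P.f^[k] v) := by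
    induction k with
    | zero => intro v; rfl
    | succ k ih => intro v; exact ih (P.f v)
  rw [this]; exact Sum.inl_injective.eq_iff

lemma graft_inB_inr_inl (P Q : PT) (c : Q.V) (v : P.V) : ¬ (graft P Q).InB (Sum.inr c) (Sum.inl v) := by
  rintro ⟨k, hk⟩
  have : ∀ v, (graft P Q).f^[k] (Sum.inl v) = Sum.inl (P.f^[k] v) := by
    clear hk
    induction k with
    | zero => intro v; rfl
    | succ k ih => intro v; exact ih (P.f v)
  rw [this] at hk
  exact Sum.inl_ne_inr hk

lemma graft_inB_inr_r (P Q : PT) (w : Q.V) : (graft P Q).InB (Sum.inr Q.r) (Sum.inr w) := by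
  obtain ⟨k, hk⟩ := Q.reach w
  induction k generalizing w with
  | zero => exact ⟨0, congrArg Sum.inr hk⟩
  | succ k ih =>
    by_cases h : w = Q.r
    · subst h; exact inB_self _ _
    · apply inB_of_f
      have : (graft P Q).f (Sum.inr w) = Sum.inr (Q.f w) := gf_inr _ _ h
      rw [this]
      exact ih _ hk

lemma graft_inB_inl_inr (P Q : PT) (c : P.V) (hc : P.IsCh c) (w : Q.V) : ¬ (graft P Q).InB (Sum.inl c) (Sum.inr w) := by
  intro h
  have := inB_disj ((graft_isCh_inl P Q c).2 hc) ((graft_isCh_inr P Q Q.r).2 rfl) h (graft_inB_inr_r P Q w)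
  exact Sum.inl_ne_inr this

lemma graft_branch_inr (P Q : PT) : Q.Iso ((graft P Q).branch (Sum.inr Q.r)) := by
  refine ⟨Equiv.ofBijective (fun w => ⟨Sum.inr w, graft_inB_inr_r P Q w⟩) ⟨?_, ?_⟩, ?_⟩
  · intro w w' h
    exact Sum.inr_injective (congrArg Subtype.val h)
  · rintro ⟨v | w, h⟩
    · exact absurd h (graft_inB_inr_inl P Q _ _)
    · exact ⟨w, rfl⟩
  · intro w
    apply Subtype.ext
    by_cases hw : w = Q.r
    · subst hw
      refine Eq.trans ?_ (congrArg Subtype.val (branch_f_root (P := graft P Q) (c := Sum.inr Q.r) (v := ⟨Sum.inr Q.r, graft_inB_inr_r P Q Q.r⟩) rfl).symm)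
      exact congrArg Sum.inr Q.fr
    · refine Eq.trans ?_ (branch_f_ne (P := graft P Q) (c := Sum.inr Q.r) (v := ⟨Sum.inr w, graft_inB_inr_r P Q w⟩) (fun h => hw (Sum.inr_injective h))).symm
      exact (gf_inr P Q hw).symm

lemma graft_rest_inr (P Q : PT) (h : Sum.inr Q.r ≠ (graft P Q).r) : P.Iso ((graft P Q).rest (Sum.inr Q.r) h) := by
  refine ⟨Equiv.ofBijective (fun v => ⟨Sum.inl v, graft_inB_inr_inl P Q _ _⟩) ⟨?_, ?_⟩, ?_⟩
  · intro w w' h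
    exact Sum.inl_injective (congrArg Subtype.val h)
  · rintro ⟨v | w, h⟩
    · exact ⟨v, rfl⟩
    · exact absurd (graft_inB_inr_r P Q w) h
  · intro v; rfl

lemma graft_branch_inl (P Q : PT) (c : P.V) (hc : P.IsCh c) : (P.branch c).Iso ((graft P Q).branch (Sum.inl c)) := by
  refine ⟨Equiv.ofBijective (fun v => ⟨Sum.inl v.1, (graft_inB_inl_inl P Q c v.1).2 v.2⟩) ⟨?_, ?_⟩, ?_⟩
  · intro w w' h
    exact Subtype.ext (Sum.inl_injective (congrArg Subtype.val h))
  · rintro ⟨v | w, h⟩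
    · exact ⟨⟨v, (graft_inB_inl_inl P Q c v).1 h⟩, rfl⟩
    · exact absurd h (graft_inB_inl_inr P Q c hc w)
  · intro v
    apply Subtype.ext
    by_cases hw : v.1 = c
    · refine Eq.trans ?_ (congrArg Subtype.val (branch_f_root (P := graft P Q) (c := Sum.inl c) (v := ⟨Sum.inl v.1, (graft_inB_inl_inl P Q c v.1).2 v.2⟩) (congrArg Sum.inl hw)).symm)
      exact congrArg (fun x : (P.branch c).V => (Sum.inl x.1 : P.V ⊕ Q.V)) (branch_f_root hw)
    · refine Eq.trans ?_ (branch_f_ne (P := graft P Q) (c := Sum.inl c) (v := ⟨Sum.inl v.1, (graft_inB_inl_inl P Q c v.1).2 v.2⟩) (fun h => hw (Sum.inl_injective h))).symm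
      exact congrArg (Sum.inl : P.V → P.V ⊕ Q.V) (branch_f_ne hw)

lemma graft_cancel {P P' Q Q' : PT} (h : (graft P Q).Iso (graft P' Q')) (hQ : Q.Iso Q') : P.Iso P' := by
  obtain ⟨e, he⟩ := h
  have hc := (graft_isCh_inr P Q Q.r).2 rfl
  have hc' := (isCh_map e he _).1 hc
  have hd := (graft_isCh_inr P' Q' Q'.r).2 rfl
  have h1 := (graft_branch_inr P Q).trans (branch_map e he _)
  have h2 := (h1.symm.trans hQ).trans (graft_branch_inr P' Q')
  obtain ⟨e2, he2, h3⟩ := swap _ _ _ hc' hd h2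
  have r1 := (graft_rest_inr P Q hc.1).trans (rest_map e he _ hc.1 hc'.1)
  have r2 := rest_map e2 he2 _ hc'.1 (by rw [h3]; exact hd.1)
  have r3 := graft_rest_inr P' Q' hd.1
  simp only [h3] at r2
  exact (r1.trans r2).trans r3.symm
end PT
end C1


section C2
namespace PT

def Aut (P : PT) : Subgroup (Equiv.Perm P.V) where
  carrier := {e | ∀ v, e (P.f v) = P.f (e v)}
  mul_mem' := by
    intro a b ha hb v
    simp only [Equiv.Perm.mul_apply]
    rw [hb, ha]
  one_mem' := fun v => rfl
  inv_mem' := by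
    intro a ha v
    rw [Equiv.Perm.inv_eq_iff_eq, ha]
    simp

lemma mem_Aut {P : PT} {e : Equiv.Perm P.V} : e ∈ P.Aut ↔ ∀ v, e (P.f v) = P.f (e v) := Iff.rfl

lemma aut_congr {P Q : PT} (h : P.Iso Q) : Nat.card P.Aut = Nat.card Q.Aut := by
  obtain ⟨e, he⟩ := h
  refine Nat.card_congr (e.permCongr.subtypeEquiv ?_)
  intro a
  have hs : ∀ w, e.symm (Q.f w) = P.f (e.symm w) := fun w => by
    rw [Equiv.symm_apply_eq, he, Equiv.apply_symm_apply]
  rw [mem_Aut, mem_Aut]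
  constructor
  · intro ha w
    rw [Equiv.permCongr_apply, Equiv.permCongr_apply, hs, ha, he]
  · intro ha w
    have := ha (e w)
    rw [Equiv.permCongr_apply, Equiv.permCongr_apply, ← he, Equiv.symm_apply_apply, Equiv.symm_apply_apply, ← he] at this
    exact e.injective this

instance (P : PT) : Finite P.Aut := inferInstance

lemma aut_pos (P : PT) : 0 < Nat.card P.Aut := Nat.card_pos

lemma orbit_eq (H : PT) (c : H.V) (hc : H.IsCh c) :
    MulAction.orbit H.Aut c = {d | H.IsCh d ∧ (H.branch d).Iso (H.branch c)} := by
  ext d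
  rw [MulAction.mem_orbit_iff]
  constructor
  · rintro ⟨⟨e, he⟩, rfl⟩
    exact ⟨(isCh_map e he c).1 hc, (branch_map e he c).symm⟩
  · rintro ⟨hd, hi⟩
    obtain ⟨e, he, h⟩ := swap H c d hc hd hi.symm
    exact ⟨⟨e, he⟩, h⟩

section stab
variable (H : PT) (c : H.V) (hc : H.IsCh c)

lemma stab_iff {H : PT} {c : H.V} (e : H.V ≃ H.V) (he : ∀ v, e (H.f v) = H.f (e v)) (h : e c = c) (v : H.V) :
    H.InB c (e v) ↔ H.InB c v := by
  have := inB_map e he c v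
  rw [h] at this
  exact this.symm

def stabB (e : H.V ≃ H.V) (he : ∀ v, e (H.f v) = H.f (e v)) (h : e c = c) : (H.branch c).Aut :=
  ⟨Equiv.Perm.subtypePerm e (stab_iff e he h), by
    refine mem_Aut.2 ?_
    intro v
    apply Subtype.ext
    by_cases hv : v.1 = c
    · refine (congrArg (fun x : (H.branch c).V => e x.1) (branch_f_root hv)).trans ?_
      refine Eq.trans ?_ (congrArg Subtype.val (branch_f_root (P := H) (c := c) (v := ⟨e v.1, (stab_iff e he h _).2 v.2⟩) ?_)).symm
      · exact h
      · exact (congrArg e hv).trans h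
    · refine (congrArg e (branch_f_ne hv)).trans ?_
      refine Eq.trans (he _) ((branch_f_ne (P := H) (c := c) (v := ⟨e v.1, (stab_iff e he h _).2 v.2⟩) ?_)).symm
      intro h'
      exact hv (e.injective (Eq.trans h' h.symm))⟩

def stabR (e : H.V ≃ H.V) (he : ∀ v, e (H.f v) = H.f (e v)) (h : e c = c) : (H.rest c hc.1).Aut :=
  ⟨Equiv.Perm.subtypePerm e (fun v => not_congr (stab_iff e he h v)), by
    refine mem_Aut.2 ?_
    intro v
    apply Subtype.ext
    exact he v.1⟩

noncomputable def stabI (eb : Equiv.Perm (H.branch c).V) (er : Equiv.Perm (H.rest c hc.1).V) : H.V ≃ H.V :=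
  Equiv.Perm.subtypeCongr (p := fun v => H.InB c v) eb er

lemma stabI_b (eb : Equiv.Perm (H.branch c).V) (er : Equiv.Perm (H.rest c hc.1).V) (v : H.V) (hv : H.InB c v) :
    stabI H c hc eb er v = (eb ⟨v, hv⟩).1 := 
  Equiv.Perm.subtypeCongr.left_apply (p := fun v => H.InB c v) eb er hv
lemma stabI_r (eb : Equiv.Perm (H.branch c).V) (er : Equiv.Perm (H.rest c hc.1).V) (v : H.V) (hv : ¬ H.InB c v) :
    stabI H c hc eb er v = (er ⟨v, hv⟩).1 := 
  Equiv.Perm.subtypeCongr.right_apply (p := fun v => H.InB c v) eb er hv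

lemma stabI_c (eb : Equiv.Perm (H.branch c).V) (er : Equiv.Perm (H.rest c hc.1).V) (hb : eb ∈ (H.branch c).Aut) :
    stabI H c hc eb er c = c := by
  rw [stabI_b H c hc eb er c (H.inB_self c)]
  exact congrArg Subtype.val (map_root eb hb)

lemma stabI_equiv (eb : Equiv.Perm (H.branch c).V) (er : Equiv.Perm (H.rest c hc.1).V) (hb : eb ∈ (H.branch c).Aut)
    (hr : er ∈ (H.rest c hc.1).Aut) (v : H.V) : stabI H c hc eb er (H.f v) = H.f (stabI H c hc eb er v) := by
  by_cases hv : H.InB c v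
  · by_cases hvc : v = c
    · subst hvc
      rw [stabI_c H _ hc eb er hb, hc.2, stabI_r H _ hc eb er _ (not_inB_r hc.1)]
      exact congrArg Subtype.val (map_root er hr)
    · rw [stabI_b H c hc eb er _ (inB_f hv hvc), stabI_b H c hc eb er v hv]
      have h2 : (eb ⟨v, hv⟩).1 ≠ c := by
        intro h
        have h3 : eb ⟨v, hv⟩ = eb (H.branch c).r := (Subtype.ext h : eb ⟨v, hv⟩ = (H.branch c).r).trans (map_root eb hb).symm
        exact hvc (congrArg Subtype.val (eb.injective h3))
      rw [← branch_f_ne h2]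
      refine Eq.trans ?_ (congrArg Subtype.val (hb ⟨v, hv⟩))
      refine congrArg (fun x => (eb x).1) ?_
      apply Subtype.ext
      exact (branch_f_ne (P := H) (c := c) (v := ⟨v, hv⟩) hvc).symm
  · rw [stabI_r H c hc eb er v hv, stabI_r H c hc eb er _ (fun h => hv (inB_of_f h))]
    exact congrArg Subtype.val (hr ⟨v, hv⟩)

noncomputable def stabEquiv : MulAction.stabilizer H.Aut c ≃ (H.branch c).Aut × (H.rest c hc.1).Aut where
  toFun e := ⟨stabB H c e.1.1 e.1.2 e.2, stabR H c hc e.1.1 e.1.2 e.2⟩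
  invFun p := ⟨⟨stabI H c hc p.1.1 p.2.1, stabI_equiv H c hc _ _ p.1.2 p.2.2⟩, stabI_c H c hc _ _ p.1.2⟩
  left_inv := by
    rintro ⟨⟨e, he⟩, h⟩
    apply Subtype.ext
    apply Subtype.ext
    apply Equiv.ext
    intro v
    by_cases hv : H.InB c v
    · exact stabI_b H c hc _ _ v hv
    · exact stabI_r H c hc _ _ v hv
  right_inv := by
    rintro ⟨⟨eb, hb⟩, ⟨er, hr⟩⟩
    apply Prod.ext
    · apply Subtype.ext
      apply Equiv.ext
      rintro ⟨v, hv⟩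
      apply Subtype.ext
      exact stabI_b H c hc _ _ v hv
    · apply Subtype.ext
      apply Equiv.ext
      rintro ⟨v, hv⟩
      apply Subtype.ext
      exact stabI_r H c hc _ _ v hv
end stab

lemma aut_card (H : PT) (c : H.V) (hc : H.IsCh c) : 
    Nat.card H.Aut = Nat.card {d // H.IsCh d ∧ (H.branch d).Iso (H.branch c)} * (Nat.card (H.branch c).Aut * Nat.card (H.rest c hc.1).Aut) := by
  have h1 : Nat.card (MulAction.orbit H.Aut c) * Nat.card (MulAction.stabilizer H.Aut c) = Nat.card H.Aut := by
    rw [← Nat.card_prod]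
    exact Nat.card_congr (MulAction.orbitProdStabilizerEquivGroup H.Aut c)
  rw [← h1, Nat.card_congr (stabEquiv H c hc), Nat.card_prod, orbit_eq H c hc]
  rfl

/-- isomorphism classes -/
instance setoid : Setoid PT := ⟨Iso, Iso.refl, Iso.symm, Iso.trans⟩

noncomputable def mm (P Q : PT) : ℕ := Nat.card {d // P.IsCh d ∧ (P.branch d).Iso Q}

lemma mm_congr {P P' Q Q' : PT} (h : P.Iso P') (h' : Q.Iso Q') : mm P Q = mm P' Q' := by
  obtain ⟨e, he⟩ := h
  refine Nat.card_congr (e.subtypeEquiv ?_)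
  intro d
  rw [← isCh_map e he]
  refine and_congr_right fun _ => ?_
  exact ⟨fun h => ((branch_map e he d).symm.trans h).trans h', fun h => ((branch_map e he d).trans h).trans h'.symm⟩

lemma mm_graft (P Q : PT) : mm (graft P Q) Q = mm P Q + 1 := by
  unfold mm
  have h1 : Nat.card {d // (graft P Q).IsCh d ∧ ((graft P Q).branch d).Iso Q} = Nat.card ({d // P.IsCh d ∧ (P.branch d).Iso Q} ⊕ Unit) := by
    refine (Nat.card_congr (Equiv.ofBijective (Sum.elim 
      (fun d => ⟨Sum.inl d.1, (graft_isCh_inl P Q d.1).2 d.2.1, (graft_branch_inl P Q d.1 d.2.1).symm.trans d.2.2⟩) 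
      (fun _ => ⟨Sum.inr Q.r, (graft_isCh_inr P Q Q.r).2 rfl, (graft_branch_inr P Q).symm⟩)) ⟨?_, ?_⟩)).symm
    · rintro (⟨d, hd⟩ | _) (⟨d', hd'⟩ | _) h
      · have : d = d' := Sum.inl_injective (congrArg Subtype.val h)
        subst this; rfl
      · exact absurd (congrArg Subtype.val h) Sum.inl_ne_inr
      · exact absurd (congrArg Subtype.val h) Sum.inr_ne_inl
      · rfl
    · rintro ⟨d | w, h, h'⟩
      · have hd := (graft_isCh_inl P Q d).1 h
        exact ⟨Sum.inl ⟨d, hd, (graft_branch_inl P Q d hd).trans h'⟩, rfl⟩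
      · have : w = Q.r := (graft_isCh_inr P Q w).1 h
        subst this
        exact ⟨Sum.inr (), rfl⟩
  rw [h1, Nat.card_sum]; simp

lemma aut_graft (P Q : PT) : Nat.card (graft P Q).Aut = (mm P Q + 1) * (Nat.card P.Aut * Nat.card Q.Aut) := by
  have hc : (graft P Q).IsCh (Sum.inr Q.r) := (graft_isCh_inr P Q Q.r).2 rfl
  rw [aut_card _ _ hc, ← mm_graft, ← aut_congr (graft_branch_inr P Q), ← aut_congr (graft_rest_inr P Q hc.1)]
  have : Nat.card {d // (graft P Q).IsCh d ∧ ((graft P Q).branch d).Iso ((graft P Q).branch (Sum.inr Q.r))} = mm (graft P Q) Q :=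
    mm_congr (Iso.refl _) (graft_branch_inr P Q).symm
  rw [this]; ring

end PT
end C2


section C3
namespace PT

/-- parent functions on `Fin n` -/
def PF (n : ℕ) : Type := {p : (Fin n → Fin n) × Fin n // p.1 p.2 = p.2 ∧ ∀ v, ∃ k, p.1^[k] v = p.2}

noncomputable instance (n : ℕ) : Fintype (PF n) := by unfold PF; infer_instance

def toPT {n : ℕ} (p : PF n) : PT := ⟨Fin n, inferInstance, p.1.1, p.1.2, p.2.1, p.2.2⟩

lemma conj_iter {α β : Type} (e : α ≃ β) (f : β → β) (k : ℕ) (v : α) : (fun v => e.symm (f (e v)))^[k] v = e.symm (f^[k] (e v)) := by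
  induction k generalizing v with
  | zero => simp
  | succ k ih => rw [Function.iterate_succ_apply, Function.iterate_succ_apply, ih]; simp

def pull {n : ℕ} (P : PT) (e : Fin n ≃ P.V) : PF n :=
  ⟨(fun v => e.symm (P.f (e v)), e.symm P.r), by simp [P.fr], by
    intro v
    obtain ⟨k, hk⟩ := P.reach (e v)
    refine ⟨k, ?_⟩
    rw [conj_iter, hk]⟩

lemma pull_equiv {n : ℕ} (P : PT) (e : Fin n ≃ P.V) (v : Fin n) : e ((toPT (pull P e)).f v) = P.f (e v) := by
  change e (e.symm (P.f (e v))) = _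
  simp

lemma pull_iso {n : ℕ} (P : PT) (e : Fin n ≃ P.V) : (toPT (pull P e)).Iso P := ⟨e, pull_equiv P e⟩

lemma eq_pull {n : ℕ} (P : PT) (e : Fin n ≃ P.V) (p : PF n) (h : ∀ v, e ((toPT p).f v) = P.f (e v)) : p = pull P e := by
  apply Subtype.ext
  apply Prod.ext
  · funext v
    change p.1.1 v = e.symm (P.f (e v))
    rw [Equiv.eq_symm_apply]
    exact h v
  · change p.1.2 = e.symm P.r
    rw [Equiv.eq_symm_apply]
    exact map_root (P := toPT p) e h

def Isos (P Q : PT) := {e : P.V ≃ Q.V // ∀ v, e (P.f v) = Q.f (e v)}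

lemma card_isos {P Q : PT} (h : P.Iso Q) : Nat.card (Isos P Q) = Nat.card Q.Aut := by
  obtain ⟨e0, he0⟩ := h
  refine Nat.card_congr ((Equiv.equivCongr e0 (Equiv.refl Q.V)).subtypeEquiv ?_)
  intro a
  rw [mem_Aut]
  have hs : ∀ w, e0.symm (Q.f w) = P.f (e0.symm w) := fun w => by
    rw [Equiv.symm_apply_eq, he0, Equiv.apply_symm_apply]
  simp only [Equiv.equivCongr_apply_apply, Equiv.refl_apply]
  constructor
  · intro ha w
    rw [hs, ha]
  · intro ha w
    have := ha (e0 w)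
    rw [← he0] at this
    simpa using this

lemma class_card {n : ℕ} (P : PT) (hP : Nat.card P.V = n) :
    Nat.card {p : PF n // (toPT p).Iso P} * Nat.card P.Aut = n.factorial := by
  have h1 : Nat.card (Fin n ≃ P.V) = n.factorial := by
    have : Fintype P.V := Fintype.ofFinite _
    rw [Nat.card_eq_fintype_card, Fintype.card_equiv (Finite.equivFinOfCardEq hP).symm]
    simp
  have h2 : Nat.card (Fin n ≃ P.V) = Nat.card (Σ p : {p : PF n // (toPT p).Iso P}, Isos (toPT p.1) P) := by
    refine Nat.card_congr (Equiv.ofBijective (fun e => ⟨⟨pull P e, pull_iso P e⟩, ⟨e, pull_equiv P e⟩⟩) ⟨?_, ?_⟩)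
    · intro e e' h
      have h0 : ∀ x y : (Σ p : {p : PF n // (toPT p).Iso P}, Isos (toPT p.1) P), x = y → (x.2.1 : Fin n ≃ P.V) = y.2.1 := by
        rintro x y rfl; rfl
      exact h0 _ _ h
    · rintro ⟨⟨p, hp⟩, ⟨e, he⟩⟩
      have hp' : p = pull P e := eq_pull P e p he
      have key : ∀ (e : Fin n ≃ P.V) (p : PF n) (hp : (toPT p).Iso P) (he : ∀ v : Fin n, e ((toPT p).f v) = P.f (e v)), p = pull P e →
          (⟨⟨pull P e, pull_iso P e⟩, ⟨e, pull_equiv P e⟩⟩ : Σ p : {p : PF n // (toPT p).Iso P}, Isos (toPT p.1) P) = ⟨⟨p, hp⟩, ⟨e, he⟩⟩ := by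
        intro e p hp he h
        subst h
        rfl
      exact ⟨e, key e p hp he hp'⟩
  have hf : ∀ p : {p : PF n // (toPT p).Iso P}, Finite (Isos (toPT p.1) P) := fun p => by unfold Isos; infer_instance
  rw [← h1, h2, Nat.card_sigma, Finset.sum_congr rfl (fun p _ => card_isos p.2)]
  simp [Nat.card_eq_fintype_card]

def RT : Type 1 := Quotient PT.setoid

def mkR (P : PT) : RT := Quotient.mk _ P
lemma mkR_eq {P Q : PT} : mkR P = mkR Q ↔ P.Iso Q := Quotient.eq (r := PT.setoid)
lemma mkR_surj : Function.Surjective mkR := Quotient.mk_surjective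

noncomputable def sR : RT → ℕ := Quotient.lift (fun P => Nat.card P.V) (by rintro _ _ ⟨e, -⟩; exact Nat.card_congr e)
noncomputable def aR : RT → ℕ := Quotient.lift (fun P => Nat.card P.Aut) (fun _ _ h => aut_congr h)
noncomputable def mR : RT → RT → ℕ := Quotient.lift₂ mm (fun _ _ _ _ h h' => mm_congr h h')
noncomputable def addR : RT → RT → RT := Quotient.lift₂ (fun P Q => mkR (graft P Q)) (fun _ _ _ _ h h' => mkR_eq.2 (graft_congr h h'))

@[simp] lemma sR_mk (P : PT) : sR (mkR P) = Nat.card P.V := rfl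
@[simp] lemma aR_mk (P : PT) : aR (mkR P) = Nat.card P.Aut := rfl
@[simp] lemma mR_mk (P Q : PT) : mR (mkR P) (mkR Q) = mm P Q := rfl
@[simp] lemma addR_mk (P Q : PT) : addR (mkR P) (mkR Q) = mkR (graft P Q) := rfl

lemma aR_pos (τ : RT) : 0 < aR τ := by
  obtain ⟨P, rfl⟩ := mkR_surj τ
  exact aut_pos P

noncomputable instance (P : PT) : Fintype {c // P.IsCh c} := Fintype.ofFinite _

lemma s_branches (P : PT) : Nat.card P.V = 1 + ∑ c : {c // P.IsCh c}, Nat.card (P.branch c.1).V := by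
  have h : Nat.card P.V = Nat.card (Unit ⊕ Σ c : {c // P.IsCh c}, (P.branch c.1).V) := by
    refine (Nat.card_congr (Equiv.ofBijective (Sum.elim (fun _ => P.r) (fun x => x.2.1)) ⟨?_, ?_⟩)).symm
    · rintro (_ | ⟨⟨c, hc⟩, ⟨v, hv⟩⟩) (_ | ⟨⟨c', hc'⟩, ⟨v', hv'⟩⟩) h
      · rfl
      · have h : P.r = v' := h
        subst h; exact absurd hv' (not_inB_r hc'.1)
      · have h : v = P.r := h
        subst h; exact absurd hv (not_inB_r hc.1)
      · have h : v = v' := h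
        subst h
        have := inB_disj hc hc' hv hv'
        subst this; rfl
    · intro v
      by_cases hv : v = P.r
      · exact ⟨Sum.inl (), hv.symm⟩
      · have : ∃ c, P.IsCh c ∧ P.InB c v := by
          obtain ⟨k, hk⟩ := P.reach v
          induction k generalizing v with
          | zero => exact absurd hk hv
          | succ k ih =>
            by_cases h : P.f v = P.r
            · exact ⟨v, ⟨hv, h⟩, P.inB_self v⟩
            · obtain ⟨c, h1, h2⟩ := ih (P.f v) h hk
              exact ⟨c, h1, inB_of_f h2⟩
        obtain ⟨c, h1, h2⟩ := this
        exact ⟨Sum.inr ⟨⟨c, h1⟩, ⟨v, h2⟩⟩, rfl⟩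
  rw [h, Nat.card_sum, Nat.card_sigma]; simp

lemma s_eqR (τ : RT) : sR τ = 1 + ∑ᶠ σ, mR τ σ * sR σ := by
  obtain ⟨P, rfl⟩ := mkR_surj τ
  rw [sR_mk, s_branches]
  congr 1
  have h1 : ∑ c : {c // P.IsCh c}, Nat.card (P.branch c.1).V = ∑ c : {c // P.IsCh c}, sR (mkR (P.branch c.1)) := rfl
  have h3 : ∀ σ, mR (mkR P) σ = (Finset.univ.filter (fun c : {c // P.IsCh c} => mkR (P.branch c.1) = σ)).card := by
    intro σ
    obtain ⟨Q, rfl⟩ := mkR_surj σ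
    rw [mR_mk]
    unfold mm
    rw [← Fintype.card_subtype, ← Nat.card_eq_fintype_card]
    refine Nat.card_congr ((Equiv.subtypeSubtypeEquivSubtypeInter _ _).symm.trans (Equiv.subtypeEquivRight ?_))
    intro c
    exact mkR_eq.symm
  rw [h1, Finset.sum_comp (fun σ => sR σ) (fun c : {c // P.IsCh c} => mkR (P.branch c.1)), finsum_eq_sum_of_support_subset (s := Finset.univ.image (fun c : {c // P.IsCh c} => mkR (P.branch c.1)))]
  · refine Finset.sum_congr rfl fun σ _ => ?_
    rw [h3, smul_eq_mul]
  · intro σ hσ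
    have : mR (mkR P) σ ≠ 0 := fun h => hσ (by simp [h])
    rw [h3, Finset.card_ne_zero] at this
    obtain ⟨c, hc⟩ := this
    simp at hc ⊢
    exact ⟨c.1, c.2, hc⟩

lemma surjR (n : ℕ) (σ : RT) (h : sR σ = n) : ∃ p : PF n, mkR (toPT p) = σ := by
  obtain ⟨P, rfl⟩ := mkR_surj σ
  exact ⟨pull P (Finite.equivFinOfCardEq h).symm, mkR_eq.2 (pull_iso _ _)⟩

lemma sR_toPT {n : ℕ} (p : PF n) : sR (mkR (toPT p)) = n := by
  rw [sR_mk]; exact Nat.card_fin n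

lemma finR (n : ℕ) : {τ | sR τ = n}.Finite := by
  refine (Set.finite_range (fun p : PF n => mkR (toPT p))).subset ?_
  intro σ h
  exact surjR n σ h

noncomputable def clR (n : ℕ) (σ : RT) : ℕ := (Finset.univ.filter (fun p : PF n => mkR (toPT p) = σ)).card

lemma clR_aR (n : ℕ) (σ : RT) (h : sR σ = n) : clR n σ * aR σ = n.factorial := by
  obtain ⟨P, rfl⟩ := mkR_surj σ
  rw [← class_card P h]
  unfold clR
  rw [← Fintype.card_subtype, ← Nat.card_eq_fintype_card]
  simp only [mkR_eq]; rfl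

lemma inv_aR (n : ℕ) (σ : RT) (h : sR σ = n) : ((aR σ : ℝ))⁻¹ = clR n σ / n.factorial := by
  have := clR_aR n σ h
  have h2 : (clR n σ : ℝ) * aR σ = n.factorial := by exact_mod_cast this
  have h3 : (aR σ : ℝ) ≠ 0 := by exact_mod_cast (aR_pos σ).ne'
  rw [← h2]
  have h4 : (clR n σ : ℝ) ≠ 0 := by
    intro h
    rw [h, zero_mul] at h2
    exact Nat.factorial_ne_zero n (by exact_mod_cast h2.symm)
  field_simp

lemma sum_clR (n : ℕ) : ∑ σ ∈ (finR n).toFinset, clR n σ = Fintype.card (PF n) := by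
  unfold clR
  rw [← Finset.card_univ]
  refine (Finset.card_eq_sum_card_fiberwise (f := fun p : PF n => mkR (toPT p)) ?_).symm
  intro p _
  simpa using sR_toPT _

lemma sum_clR_sq (n : ℕ) : ∑ σ ∈ (finR n).toFinset, clR n σ ^ 2 = Nat.card {q : PF n × PF n // (toPT q.1).Iso (toPT q.2)} := by
  rw [Nat.card_eq_fintype_card, Fintype.card_subtype]
  rw [Finset.card_eq_sum_card_fiberwise (f := fun q : PF n × PF n => mkR (toPT q.1)) (t := (finR n).toFinset)]
  · refine Finset.sum_congr rfl fun σ _ => ?_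
    unfold clR
    rw [sq, ← Finset.card_product]
    congr 1
    ext ⟨p, q⟩
    simp only [Finset.mem_product, Finset.mem_filter, Finset.mem_univ, true_and, ← mkR_eq]
    constructor
    · rintro ⟨rfl, h⟩; exact ⟨h.symm, rfl⟩
    · rintro ⟨h, rfl⟩; exact ⟨rfl, h.symm⟩
  · intro p _
    simpa using sR_toPT _

lemma card_PF_le (n : ℕ) : Fintype.card (PF n) ≤ n ^ n * n := by
  refine (Fintype.card_subtype_le _).trans ?_
  simp

def pt : PT := ⟨Unit, inferInstance, id, (), rfl, fun _ => ⟨0, rfl⟩⟩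

lemma aut_pt : Nat.card pt.Aut = 1 := by
  rw [Nat.card_eq_one_iff_unique]
  have : Subsingleton pt.V := inferInstanceAs (Subsingleton Unit)
  exact ⟨inferInstance, ⟨1⟩⟩

lemma mm_pt : mm pt pt = 0 := by
  unfold mm
  rw [Nat.card_eq_zero]
  left
  refine ⟨?_⟩
  rintro ⟨d, h, -⟩
  exact h.1 rfl

lemma sum_inv_aR_le (n : ℕ) : ∑ σ ∈ (finR n).toFinset, ((aR σ : ℝ))⁻¹ = Fintype.card (PF n) / n.factorial := by
  rw [← sum_clR, Nat.cast_sum, Finset.sum_div]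
  refine Finset.sum_congr rfl fun σ hσ => ?_
  exact inv_aR n σ (by simpa using hσ)

lemma inv_aR_le_one (τ : RT) : ((aR τ : ℝ))⁻¹ ≤ 1 := by
  have : (1:ℝ) ≤ aR τ := by exact_mod_cast aR_pos τ
  exact inv_le_one_of_one_le₀ this

noncomputable def W (k : ℕ) (hk : 1 ≤ k) : WTree k RT where
  s := sR
  s_pos τ := by rw [s_eqR]; omega
  fin := finR
  b τ := ((aR τ : ℝ))⁻¹ ^ k
  b_pos τ := by
    have : (0:ℝ) < aR τ := by exact_mod_cast aR_pos τ
    positivity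
  b_le τ := by
    exact pow_le_one₀ (by positivity) (inv_aR_le_one τ)
  m := mR
  add := addR
  add_inj := by
    intro σ τ τ' h
    obtain ⟨Q, rfl⟩ := mkR_surj σ
    obtain ⟨P, rfl⟩ := mkR_surj τ
    obtain ⟨P', rfl⟩ := mkR_surj τ'
    simp only [addR_mk, mkR_eq] at h ⊢
    exact graft_cancel h (Iso.refl Q)
  add_surj := by
    intro τ σ h
    obtain ⟨Q, rfl⟩ := mkR_surj σ
    obtain ⟨P, rfl⟩ := mkR_surj τ
    rw [mR_mk] at h
    unfold mm at h
    have h2 := (Nat.card_pos_iff.1 h).1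
    obtain ⟨c, hc, hi⟩ := h2
    refine ⟨mkR (P.rest c hc.1), ?_⟩
    rw [addR_mk, mkR_eq]
    exact (graft_congr (Iso.refl _) hi.symm).trans (graft_rest_branch P c hc)
  m_add := by
    intro τ σ
    obtain ⟨Q, rfl⟩ := mkR_surj σ
    obtain ⟨P, rfl⟩ := mkR_surj τ
    simp [mm_graft]
  s_add := by
    intro τ σ
    obtain ⟨Q, rfl⟩ := mkR_surj σ
    obtain ⟨P, rfl⟩ := mkR_surj τ
    simp only [addR_mk, sR_mk]
    exact Nat.card_sum
  b_add := by
    intro τ σ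
    have h3 : (aR τ : ℝ) ≠ 0 := by exact_mod_cast (aR_pos τ).ne'
    have h4 : (aR σ : ℝ) ≠ 0 := by exact_mod_cast (aR_pos σ).ne'
    have h5 : ((aR (addR τ σ) : ℕ) : ℝ) = (mR τ σ + 1) * (aR τ * aR σ) := by
      obtain ⟨Q, rfl⟩ := mkR_surj σ
      obtain ⟨P, rfl⟩ := mkR_surj τ
      simp only [addR_mk, aR_mk, aut_graft, mR_mk]
      push_cast; ring
    rw [h5, ← mul_pow, ← mul_pow]
    congr 1
    have : (mR τ σ : ℝ) + 1 ≠ 0 := by positivity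
    field_simp
  s_eq := s_eqR
  ex_one := by
    refine ⟨mkR pt, ?_, ?_⟩
    · rw [sR_mk]; exact Nat.card_unique (α := Unit)
    · rw [aR_mk, aut_pt]; simp
  ex_two := by
    refine ⟨mkR (graft pt pt), ?_, ?_⟩
    · rw [sR_mk]
      have : Nat.card (graft pt pt).V = Nat.card (Unit ⊕ Unit) := rfl
      rw [this]; simp
    · rw [aR_mk, aut_graft, mm_pt, aut_pt]; simp
  bd := by
    refine ⟨2 * Real.exp 1, ?_, fun n => ?_⟩
    · have := Real.add_one_le_exp 1
      linarith
    · calc ∑ τ ∈ (finR n).toFinset, ((aR τ : ℝ))⁻¹ ^ k ≤ ∑ τ ∈ (finR n).toFinset, ((aR τ : ℝ))⁻¹ := by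
            refine Finset.sum_le_sum fun τ _ => ?_
            exact pow_le_of_le_one (by positivity) (inv_aR_le_one τ) (by omega)
        _ = Fintype.card (PF n) / n.factorial := sum_inv_aR_le n
        _ ≤ ((n:ℝ) ^ n * n) / n.factorial := by
            gcongr
            exact_mod_cast card_PF_le n
        _ = n * ((n:ℝ)^n / n.factorial) := by ring
        _ ≤ 2 ^ n * Real.exp n := by
            gcongr
            · exact_mod_cast (Nat.lt_two_pow_self (n := n)).le
            · exact Real.pow_div_factorial_le_exp n (by positivity) n
        _ = (2 * Real.exp 1) ^ n := by
            rw [mul_pow, ← Real.exp_nat_mul]; simp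

lemma f1_eq (n : ℕ) : (W 1 le_rfl).f n = Nat.card (PF n) / n.factorial := by
  rw [Nat.card_eq_fintype_card, ← sum_inv_aR_le]
  unfold WTree.f
  simp only [W, pow_one]

lemma f2_eq (n : ℕ) : (W 2 (by norm_num)).f n = Nat.card {q : PF n × PF n // (toPT q.1).Iso (toPT q.2)} / (n.factorial : ℝ) ^ 2 := by
  rw [← sum_clR_sq, Nat.cast_sum, Finset.sum_div]
  unfold WTree.f
  simp only [W]
  refine Finset.sum_congr rfl fun σ hσ => ?_
  rw [inv_aR n σ (by simpa using hσ)]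
  push_cast
  rw [div_pow]

end PT
end C3


section C4
namespace PT

lemma unique_f (P : PT) (g : P.V → P.V) (gr : g P.r = P.r) (hg : ∀ v, v ≠ P.r → g v = P.f v ∨ g (P.f v) = v) (v : P.V) : g v = P.f v := by
  by_contra hv
  have step : ∀ v, g v ≠ P.f v → g (P.f v) ≠ P.f (P.f v) := by
    intro v hv h
    have hvr : v ≠ P.r := by
      rintro rfl; exact hv (by rw [gr, P.fr])
    have h1 : g (P.f v) = v := (hg v hvr).resolve_left hv
    have h2 : P.f (P.f v) = v := h.symm.trans h1
    have h3 : ∀ k, P.f^[k] v = v ∨ P.f^[k] v = P.f v := by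
      intro k
      induction k with
      | zero => left; rfl
      | succ k ih =>
        rw [Function.iterate_succ_apply']
        rcases ih with ih | ih
        · right; rw [ih]
        · left; rw [ih, h2]
    obtain ⟨k, hk⟩ := P.reach v
    rcases h3 k with h | h
    · exact hvr (h.symm.trans hk)
    · have h4 : P.f v = P.r := h.symm.trans hk
      rw [h4, gr] at h1
      exact hvr h1.symm
  have all : ∀ k, g (P.f^[k] v) ≠ P.f (P.f^[k] v) := by
    intro k
    induction k with
    | zero => exact hv
    | succ k ih => rw [Function.iterate_succ_apply']; exact step _ ih
  obtain ⟨k, hk⟩ := P.reach v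
  have := all k
  rw [hk, gr, P.fr] at this
  exact this rfl

def gr (P : PT) : SimpleGraph P.V := SimpleGraph.fromRel (fun u v => P.f u = v)

lemma gr_adj (P : PT) (u v : P.V) : P.gr.Adj u v ↔ u ≠ v ∧ (P.f u = v ∨ P.f v = u) := by
  simp [gr, SimpleGraph.fromRel_adj]

lemma gr_adj_f (P : PT) {v : P.V} (h : v ≠ P.r) : P.gr.Adj v (P.f v) := by
  rw [gr_adj]
  exact ⟨fun h' => h (P.fix h'.symm), Or.inl rfl⟩

lemma gr_connected (P : PT) : P.gr.Connected := by
  have h1 : ∀ v, P.gr.Reachable v (P.f v) := by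
    intro v
    by_cases h : v = P.r
    · subst h; rw [P.fr]
    · exact (P.gr_adj_f h).reachable
  have h2 : ∀ k v, P.gr.Reachable v (P.f^[k] v) := by
    intro k
    induction k with
    | zero => intro v; rfl
    | succ k ih => intro v; exact (h1 v).trans (ih _)
  have h3 : ∀ v, P.gr.Reachable v P.r := by
    intro v
    obtain ⟨k, hk⟩ := P.reach v
    exact hk ▸ h2 k v
  haveI : Nonempty P.V := ⟨P.r⟩
  exact ⟨fun u v => (h3 u).trans (h3 v).symm⟩

lemma gr_isTree (P : PT) : P.gr.IsTree := by
  rw [SimpleGraph.isTree_iff_connected_and_card]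
  refine ⟨P.gr_connected, le_antisymm ?_ P.gr_connected.card_vert_le_card_edgeSet_add_one⟩
  have h1 : Nat.card P.V = Nat.card {v // v ≠ P.r} + 1 := by
    haveI := Fintype.ofFinite P.V
    rw [Nat.card_eq_fintype_card, Nat.card_eq_fintype_card, Fintype.card_subtype_compl]
    have : 0 < Fintype.card P.V := Fintype.card_pos_iff.2 ⟨P.r⟩
    simp; omega
  rw [h1]
  apply Nat.add_le_add_right
  refine Nat.card_le_card_of_surjective (fun v : {v // v ≠ P.r} => (⟨s(v.1, P.f v.1), P.gr_adj_f v.2⟩ : P.gr.edgeSet)) ?_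
  rintro ⟨e, he⟩
  induction e with
  | h u v =>
    have he' : P.gr.Adj u v := he
    rw [gr_adj] at he'
    obtain ⟨hne, h | h⟩ := he'
    · refine ⟨⟨u, ?_⟩, Subtype.ext ?_⟩
      · rintro rfl; exact hne (P.fr.symm.trans h)
      · simp [h]
    · refine ⟨⟨v, ?_⟩, Subtype.ext ?_⟩
      · rintro rfl; exact hne (h.symm.trans P.fr)
      · simp only [h]; exact Sym2.eq_swap

lemma gr_iso_iff (P Q : PT) : P.Iso Q ↔ ∃ φ : P.gr ≃g Q.gr, φ P.r = Q.r := by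
  constructor
  · rintro ⟨e, he⟩
    refine ⟨⟨e, ?_⟩, map_root e he⟩
    intro u v
    rw [gr_adj, gr_adj, ← he, ← he]
    simp
  · rintro ⟨φ, hr⟩
    refine ⟨φ.toEquiv, fun v => ?_⟩
    have hr' : φ.symm Q.r = P.r := by rw [← hr]; exact φ.symm_apply_apply _
    have := unique_f P (fun v => φ.symm (Q.f (φ v))) (by simp only [hr, Q.fr]; exact hr') ?_ v
    · rw [← this]
      exact φ.apply_symm_apply _
    · intro v hv
      have h1 := (gr_adj Q _ _).1 (φ.map_adj_iff.2 (P.gr_adj_f hv))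
      rcases h1.2 with h | h
      · left; simp only [h]; exact φ.symm_apply_apply _
      · right; simp only [h]; exact φ.symm_apply_apply _

noncomputable def toRT {n : ℕ} (p : PF n) : RTree n := ⟨(toPT p).gr, (toPT p).gr_isTree, p.1.2⟩

lemma toRT_isom {n : ℕ} (p q : PF n) : (toRT p).Isom (toRT q) ↔ (toPT p).Iso (toPT q) := (gr_iso_iff (toPT p) (toPT q)).symm

lemma toRT_inj {n : ℕ} : Function.Injective (toRT : PF n → RTree n) := by
  intro p q h
  have hg : (toPT p).gr = ((toPT q).gr : SimpleGraph (Fin n)) := congrArg RTree.graph h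
  have hr : p.1.2 = q.1.2 := congrArg RTree.root h
  have key : ∀ v : Fin n, q.1.1 v = p.1.1 v := by
    refine unique_f (toPT p) q.1.1 ?_ ?_
    · change q.1.1 p.1.2 = p.1.2
      rw [hr]; exact q.2.1
    · intro v hv
      have h1 : (toPT q).gr.Adj v ((toPT p).f v) := by
        have := (toPT p).gr_adj_f hv
        exact hg ▸ this
      exact ((gr_adj _ _ _).1 h1).2
  apply Subtype.ext
  apply Prod.ext
  · funext v; exact (key v).symm
  · exact hr

lemma toRT_surj {n : ℕ} : Function.Surjective (toRT : PF n → RTree n) := by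
  rintro ⟨G, hG, r⟩
  have hc := hG.connected
  have h1 : ∀ v, v ≠ r → ∃ w, G.Adj v w ∧ G.dist w r < G.dist v r := by
    intro v hv
    obtain ⟨p, hp⟩ := hc.exists_walk_length_eq_dist v r
    cases p with
    | nil => exact absurd rfl hv
    | cons h q =>
      refine ⟨_, h, ?_⟩
      rw [← hp]
      have := SimpleGraph.dist_le q
      simp; omega
  choose! g hg using h1
  set f : Fin n → Fin n := fun v => if v = r then r else g v with hf
  have fr : f r = r := by simp [hf]
  have fn : ∀ v, v ≠ r → f v = g v := fun v hv => by simp [hf, hv]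
  have hreach : ∀ v, ∃ k, f^[k] v = r := by
    intro v
    induction hd : G.dist v r using Nat.strong_induction_on generalizing v with
    | _ d ih =>
      by_cases hv : v = r
      · exact ⟨0, hv⟩
      · obtain ⟨k, hk⟩ := ih (G.dist (f v) r) (by rw [fn v hv, ← hd]; exact (hg v hv).2) (f v) rfl
        exact ⟨k+1, hk⟩
  refine ⟨⟨(f, r), fr, hreach⟩, ?_⟩
  have hle : ((toPT ⟨(f, r), fr, hreach⟩).gr : SimpleGraph (Fin n)) ≤ G := by
    intro u v h
    have h2 : u ≠ v ∧ (f u = v ∨ f v = u) := (gr_adj _ _ _).1 h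
    obtain ⟨hne, h | h⟩ := h2
    · have hu : u ≠ r := fun h' => hne (h'.trans (fr.symm.trans ((congrArg f h').symm.trans h)))
      rw [fn u hu] at h
      rw [← h]; exact (hg u hu).1
    · have hu : v ≠ r := fun h' => hne (h.symm.trans ((congrArg f h').trans (fr.trans h'.symm)))
      rw [fn v hu] at h
      rw [← h]; exact (hg v hu).1.symm
  have hge := (SimpleGraph.isTree_iff_minimal_connected.1 hG).2 (gr_connected (toPT ⟨(f, r), fr, hreach⟩)) hle
  have : ((toPT ⟨(f, r), fr, hreach⟩).gr : SimpleGraph (Fin n)) = G := le_antisymm hle hge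
  unfold toRT
  congr 1

noncomputable def eRT (n : ℕ) : PF n ≃ RTree n := Equiv.ofBijective toRT ⟨toRT_inj, toRT_surj⟩

lemma probIsom_eq (n : ℕ) : probIsom n = (W 2 (by norm_num)).f n / (W 1 le_rfl).f n ^ 2 := by
  have h1 : Nat.card (RTree n) = Nat.card (PF n) := (Nat.card_congr (eRT n)).symm
  have h2 : Nat.card {p : RTree n × RTree n // p.1.Isom p.2} = Nat.card {q : PF n × PF n // (toPT q.1).Iso (toPT q.2)} := by
    refine (Nat.card_congr (((eRT n).prodCongr (eRT n)).subtypeEquiv ?_)).symm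
    rintro ⟨p, q⟩
    exact (toRT_isom p q).symm
  unfold probIsom
  rw [h1, h2, f1_eq, f2_eq]
  have : (n.factorial : ℝ) ≠ 0 := by positivity
  rw [div_pow, div_div_div_cancel_right₀ (by positivity)]

lemma probIsom_le_one (n : ℕ) : probIsom n ≤ 1 := by
  unfold probIsom
  apply div_le_one_of_le₀ _ (by positivity)
  have : Nat.card {p : RTree n × RTree n // p.1.Isom p.2} ≤ Nat.card (RTree n × RTree n) := Nat.card_le_card_of_injective _ Subtype.val_injective
  rw [Nat.card_prod] at this
  rw [sq]
  exact_mod_cast this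

end PT

theorem main_aux : ∃ A c : ℝ, 0 < A ∧ 0 < c ∧ c < 1 ∧
      Filter.Tendsto
        (fun n : ℕ => probIsom n / ((n : ℝ) ^ (3 / 2 : ℝ) * c ^ n))
        Filter.atTop (nhds A) := by
  obtain ⟨A1, ρ1, hA1, hρ1, h1⟩ := (PT.W 1 le_rfl).asymp le_rfl
  obtain ⟨A2, ρ2, hA2, hρ2, h2⟩ := (PT.W 2 (by norm_num)).asymp (by norm_num)
  have hlim : Filter.Tendsto
        (fun n : ℕ => probIsom n / ((n : ℝ) ^ (3 / 2 : ℝ) * (ρ1 ^ 2 / ρ2) ^ n))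
        Filter.atTop (nhds (A2 / A1 ^ 2)) := by
    refine (h2.div (h1.pow 2) (by positivity)).congr' ?_
    filter_upwards [Filter.eventually_gt_atTop 0] with n hn
    rw [PT.probIsom_eq]
    have h3 : (n : ℝ) ^ (3 / 2 : ℝ) ≠ 0 := by positivity
    simp only [Pi.div_apply, Pi.pow_apply]
    generalize (n : ℝ) ^ (3 / 2 : ℝ) = x at h3
    rw [div_pow, ← pow_mul, mul_comm 2 n, pow_mul]
    by_cases h0 : (PT.W 1 le_rfl).f n = 0
    · rw [h0]; simp
    · field_simp
  have hc : ρ1 ^ 2 / ρ2 < 1 := by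
    by_contra hc
    push Not at hc
    have hA : 0 < A2 / A1 ^ 2 := by positivity
    have h0 : Filter.Tendsto (fun n : ℕ => (n : ℝ) ^ (-(3 / 2 : ℝ))) Filter.atTop (nhds 0) :=
      (tendsto_rpow_neg_atTop (by norm_num)).comp tendsto_natCast_atTop_atTop
    refine absurd (le_of_tendsto_of_tendsto hlim h0 ?_) (not_le.2 hA)
    filter_upwards [Filter.eventually_gt_atTop 0] with n hn
    have hx : 0 < (n : ℝ) ^ (3 / 2 : ℝ) := by positivity
    rw [Real.rpow_neg (by positivity), ← one_div]
    refine div_le_div₀ zero_le_one (PT.probIsom_le_one n) hx ?_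
    exact le_mul_of_one_le_right hx.le (one_le_pow₀ hc)
  exact ⟨_, _, by positivity, by positivity, hc, hlim⟩
end C4

/-- The probability `p_n` that two uniformly random rooted
labeled trees on `n` vertices are isomorphic satisfies
`p_n / (n^(3/2) c^n) → A` for some constants `A > 0` and `c ∈ (0,1)`. -/
theorem prob_isom_labeled_asymptotics :
    ∃ A c : ℝ, 0 < A ∧ 0 < c ∧ c < 1 ∧
      Filter.Tendsto
        (fun n : ℕ => probIsom n / ((n : ℝ) ^ (3 / 2 : ℝ) * c ^ n))
        Filter.atTop (nhds A) := by
  exact main_aux
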